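/- arXiv:1005.2561 — 3 statements merged into one kernel-verified Lean document; each statement's English description precedes it below -/
import Mathlib

section
/- For every n ≥ 0 and every rectangular partition λ = (m,m) with exactly two rows, there is a content-preserving bijection between seminoncrossing tableaux of shape λ with entries at most n and semistandard tableaux of shape λ with entries at most n. -/
/-!
The bijection keeps the multiset `A` of top entries and the multiset `B` of bottom entries
separately, so it is content-preserving for a trivial reason. On both sides the pairs `(A, B)`
that occur are those with `m` entries each satisfying the ballot condition
`#{y ∈ B | y ≤ v} ≤ #{x ∈ A | x < v}` for all `v`, and each such pair occurs exactly once: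

* a semistandard tableau is recovered by sorting `A` and `B` into rows, strictness of the columns
  being equivalent to the ballot condition (`lt_of_ballot`, `ballot_of_lt`);
* a seminoncrossing tableau is recovered by parenthesis matching. With `b = min B` and `a` the
  largest element of `A` below `b`, the interval `[a, b]` has to be a column (`innermost_mem`),
  and it crosses no interval built from the other entries. Removing it preserves the ballot
  condition, so existence and uniqueness follow by induction on the number of columns
  (`noncrossing_exists`, `noncrossing_unique`).
-/

open Finset

/-- `T` is a semistandard tableau of two-row shape `(a,b)` (with `b ≤ a` in intended use)
with entries in `Fin n` (i.e. entries at most `n`): both rows weakly increase and the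
columns strictly increase. -/
def IsSSYT2 {n a b : ℕ} (T : (Fin a → Fin n) × (Fin b → Fin n)) : Prop :=
  (∀ i j : Fin a, i ≤ j → T.1 i ≤ T.1 j) ∧
  (∀ i j : Fin b, i ≤ j → T.2 i ≤ T.2 j) ∧
  (∀ (i : Fin b) (h : (i : ℕ) < a), T.1 ⟨i, h⟩ < T.2 i)

open Classical in
/-- The Schur polynomial `s_{(a,b)}(x_1,…,x_n)` of a two-row shape, evaluated at
`x = (x_1,…,x_n)`: the sum over all semistandard tableaux of shape `(a,b)` with entries
at most `n` of the products of the variables indexed by the entries. -/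
noncomputable def schur2 {R : Type*} [CommSemiring R] (n a b : ℕ) (x : Fin n → R) : R :=
  ∑ T : (Fin a → Fin n) × (Fin b → Fin n),
    if IsSSYT2 T then (∏ p, x (T.1 p)) * ∏ p, x (T.2 p) else 0

open Classical in
/-- The complete homogeneous symmetric polynomial `h_k(x_1,…,x_n)` evaluated at
`x = (x_1,…,x_n)`: the sum over weakly increasing sequences `1 ≤ i_1 ≤ ⋯ ≤ i_k ≤ n`
of `x_{i_1} ⋯ x_{i_k}`. -/
noncomputable def hh {R : Type*} [CommSemiring R] (n k : ℕ) (x : Fin n → R) : R :=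
  ∑ T : Fin k → Fin n,
    if (∀ i j : Fin k, i ≤ j → T i ≤ T j) then ∏ p, x (T p) else 0

/-- The crossing relation for columns of a two-row tableau, viewed as intervals:
`[a,b]` and `[c,d]` (with `a<b`, `c<d`) cross iff `a<c<b<d` or `c<a<d<b`. -/
def colCross {n : ℕ} (p q : Fin n × Fin n) : Prop :=
  (p.1 < q.1 ∧ q.1 < p.2 ∧ p.2 < q.2) ∨ (q.1 < p.1 ∧ p.1 < q.2 ∧ q.2 < p.2)

/-- A monotone tuple is determined by the multiset of its entries. -/
lemma monotone_eq_of_map_eq {n m : ℕ} {f g : Fin m → Fin n} (hf : Monotone f)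
    (hg : Monotone g) (h : Multiset.map f univ.val = Multiset.map g univ.val) : f = g := by
  have hp : (List.ofFn f).Perm (List.ofFn g) := by
    rw [← Multiset.coe_eq_coe]
    simpa [Fin.univ_val_map] using h
  exact List.ofFn_injective
    (hp.eq_of_pairwise' hf.sortedLE_ofFn.pairwise hg.sortedLE_ofFn.pairwise)

lemma exists_monotone_map_eq {n m : ℕ} (A : Multiset (Fin n)) (hA : A.card = m) :
    ∃ f : Fin m → Fin n, Monotone f ∧ Multiset.map f univ.val = A := by
  subst hA
  induction A using Quotient.inductionOn with
  | h l =>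
    refine ⟨l.get ∘ Tuple.sort l.get, Tuple.monotone_sort l.get, ?_⟩
    change Multiset.map (l.get ∘ Tuple.sort l.get) (univ : Finset (Fin l.length)).val =
      (l : Multiset (Fin n))
    rw [← Multiset.map_map]
    have : Multiset.map (Tuple.sort l.get) (univ : Finset (Fin l.length)).val = univ.val :=
      Multiset.map_univ_val_equiv _
    rw [this, Fin.univ_val_map, List.ofFn_get]

/-- The ballot condition relating the multiset `A` of top entries of a tableau to the multiset
`B` of its bottom entries: up to each value `v`, reading the bottom entries equal to `v` before
the top entries equal to `v`, no more intervals have been closed than opened. -/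
def Ballot {n : ℕ} (A B : Multiset (Fin n)) : Prop :=
  ∀ v, (B.filter (· ≤ v)).card ≤ (A.filter (· < v)).card

lemma ballot_of_columns {n : ℕ} (C : Multiset (Fin n × Fin n)) (hC : ∀ p ∈ C, p.1 < p.2) :
    Ballot (C.map Prod.fst) (C.map Prod.snd) := by
  intro v
  rw [Multiset.filter_map, Multiset.filter_map, Multiset.card_map, Multiset.card_map,
    ← Multiset.countP_eq_card_filter, ← Multiset.countP_eq_card_filter]
  induction C using Multiset.induction with
  | empty => simp
  | cons p C ih =>
    have h1 := ih fun q hq => hC q (Multiset.mem_cons_of_mem hq)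
    have h2 := hC p (Multiset.mem_cons_self p C)
    rw [Multiset.countP_cons, Multiset.countP_cons]
    simp only [Function.comp_apply] at *
    split_ifs with h3 h4
    · omega
    · exact absurd (h2.trans_le h3) h4
    · omega
    · omega

/-- For monotone rows, the ballot condition gives strict increase down the columns: if the
`i`-th column failed, at least `i + 1` bottom entries would be at most `g i`, but
only at most `i` top entries would be below it. -/
lemma lt_of_ballot {n m : ℕ} {f g : Fin m → Fin n} (hf : Monotone f) (hg : Monotone g)
    (h : Ballot (Multiset.map f univ.val) (Multiset.map g univ.val)) (i : Fin m) :
    f i < g i := by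
  by_contra! hi
  have h1 := h (g i)
  rw [Multiset.filter_map, Multiset.filter_map, Multiset.card_map, Multiset.card_map] at h1
  change (univ.filter fun j => g j ≤ g i).card ≤ (univ.filter fun j => f j < g i).card at h1
  have h2 : Finset.Iic i ⊆ univ.filter fun j => g j ≤ g i := by
    intro j hj
    simpa using hg (Finset.mem_Iic.1 hj)
  have h3 : (univ.filter fun j => f j < g i) ⊆ Finset.Iio i := by
    intro j hj
    simp only [mem_filter, mem_univ, true_and] at hj
    rw [Finset.mem_Iio]
    by_contra! hij
    exact absurd (hj.trans_le hi) (not_lt.2 (hf hij))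
  have h4 := Finset.card_le_card h2
  have h5 := Finset.card_le_card h3
  rw [Fin.card_Iic] at h4
  rw [Fin.card_Iio] at h5
  omega

lemma ballot_of_lt {n m : ℕ} {f g : Fin m → Fin n} (h : ∀ i, f i < g i) :
    Ballot (Multiset.map f univ.val) (Multiset.map g univ.val) := by
  have := ballot_of_columns (Multiset.map (fun i => (f i, g i)) (univ : Finset (Fin m)).val)
    (by simpa using h)
  simpa [Multiset.map_map, Function.comp_def] using this

/-- The interval `[a, b]` with `b` the smallest bottom entry and `a` the largest top entry
below `b` belongs to every noncrossing `C`: otherwise the interval starting at `a` and the one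
ending at `b` would cross. -/
lemma innermost_mem {n : ℕ} {C : Multiset (Fin n × Fin n)} (hC : ∀ p ∈ C, p.1 < p.2)
    (hx : ∀ p ∈ C, ∀ q ∈ C, ¬ colCross p q) {a b : Fin n}
    (ha : a ∈ C.map Prod.fst) (hb : b ∈ C.map Prod.snd) (hab : a < b)
    (hbmin : ∀ y ∈ C.map Prod.snd, b ≤ y) (hamax : ∀ x ∈ C.map Prod.fst, x < b → x ≤ a) :
    (a, b) ∈ C := by
  obtain ⟨⟨a', d⟩, hp, rfl⟩ := Multiset.mem_map.1 ha
  obtain ⟨⟨c, b'⟩, hq, rfl⟩ := Multiset.mem_map.1 hb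
  simp only at *
  rcases (hbmin d (Multiset.mem_map_of_mem Prod.snd hp)).eq_or_lt with h | h
  · rwa [h]
  rcases (hamax c (Multiset.mem_map_of_mem Prod.fst hq) (hC _ hq)).eq_or_lt with h' | h'
  · rwa [← h']
  · exact absurd (Or.inl ⟨h', hab, h⟩) (hx _ hq _ hp)

lemma exists_innermost {n : ℕ} {A B : Multiset (Fin n)} (hB : B ≠ 0) (h : Ballot A B) :
    ∃ a ∈ A, ∃ b ∈ B, a < b ∧ (∀ y ∈ B, b ≤ y) ∧ ∀ x ∈ A, x < b → x ≤ a := by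
  obtain ⟨y, hy⟩ := Multiset.exists_mem_of_ne_zero hB
  obtain ⟨b, hb, hbmin⟩ := B.toFinset.exists_min_image id ⟨y, by simpa using hy⟩
  have hbB : b ∈ B := by simpa using hb
  have hpos : 0 < (A.filter (· < b)).card :=
    (Multiset.card_pos_iff_exists_mem.2 ⟨b, by simp [hbB]⟩).trans_le (h b)
  obtain ⟨x, hx⟩ := Multiset.card_pos_iff_exists_mem.1 hpos
  obtain ⟨a, ha, hamax⟩ := (A.filter (· < b)).toFinset.exists_max_image id
    ⟨x, by simpa using hx⟩
  simp only [Multiset.mem_toFinset, Multiset.mem_filter, id] at ha hamax hbmin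
  exact ⟨a, ha.1, b, hbB, ha.2, hbmin, fun x hx hxb => hamax x ⟨hx, hxb⟩⟩

/-- A noncrossing multiset of intervals is determined by its left and right endpoints. -/
lemma noncrossing_unique {n : ℕ} : ∀ (C D : Multiset (Fin n × Fin n)),
    (∀ p ∈ C, p.1 < p.2) → (∀ p ∈ C, ∀ q ∈ C, ¬ colCross p q) →
    (∀ p ∈ D, p.1 < p.2) → (∀ p ∈ D, ∀ q ∈ D, ¬ colCross p q) →
    C.map Prod.fst = D.map Prod.fst → C.map Prod.snd = D.map Prod.snd → C = D := by
  intro C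
  induction hk : C.card generalizing C with
  | zero =>
    intro D _ _ _ _ h1 _
    rw [Multiset.card_eq_zero] at hk
    subst hk
    exact (Multiset.map_eq_zero.1 h1.symm).symm
  | succ k ih =>
    intro D hC hCx hD hDx h1 h2
    have hne : C.map Prod.snd ≠ 0 := by
      intro h
      rw [Multiset.map_eq_zero.1 h] at hk
      simp at hk
    obtain ⟨a, ha, b, hb, hab, hbmin, hamax⟩ :=
      exists_innermost hne (ballot_of_columns C hC)
    have hmC := innermost_mem hC hCx ha hb hab hbmin hamax
    rw [h1] at ha hamax
    rw [h2] at hb hbmin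
    have hmD := innermost_mem hD hDx ha hb hab hbmin hamax
    obtain ⟨C', rfl⟩ := Multiset.exists_cons_of_mem hmC
    obtain ⟨D', rfl⟩ := Multiset.exists_cons_of_mem hmD
    simp only [Multiset.map_cons, Multiset.cons_inj_right, Multiset.card_cons,
      Nat.add_right_cancel_iff] at h1 h2 hk
    rw [ih C' hk D' (fun p hp => hC p (Multiset.mem_cons_of_mem hp))
      (fun p hp q hq => hCx p (Multiset.mem_cons_of_mem hp) q (Multiset.mem_cons_of_mem hq))
      (fun p hp => hD p (Multiset.mem_cons_of_mem hp))
      (fun p hp q hq => hDx p (Multiset.mem_cons_of_mem hp) q (Multiset.mem_cons_of_mem hq))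
      h1 h2]

/-- Parenthesis matching: left and right endpoints satisfying the ballot condition can be joined
into a noncrossing multiset of intervals. -/
lemma noncrossing_exists {n : ℕ} : ∀ (A B : Multiset (Fin n)), A.card = B.card → Ballot A B →
    ∃ C : Multiset (Fin n × Fin n), (∀ p ∈ C, p.1 < p.2) ∧
      (∀ p ∈ C, ∀ q ∈ C, ¬ colCross p q) ∧ C.map Prod.fst = A ∧ C.map Prod.snd = B := by
  intro A B
  induction hk : B.card generalizing A B with
  | zero =>
    intro hA _
    rw [Multiset.card_eq_zero] at hk hA
    exact ⟨0, by simp [hk, hA]⟩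
  | succ k ih =>
    intro hA h
    have hne : B ≠ 0 := by
      rintro rfl
      simp at hk
    obtain ⟨a, ha, b, hb, hab, hbmin, hamax⟩ := exists_innermost hne h
    obtain ⟨A, rfl⟩ := Multiset.exists_cons_of_mem ha
    obtain ⟨B, rfl⟩ := Multiset.exists_cons_of_mem hb
    have hbal : Ballot A B := by
      intro v
      by_cases hv : b ≤ v
      · have := h v
        rw [Multiset.filter_cons_of_pos (p := (· ≤ v)) _ hv,
          Multiset.filter_cons_of_pos (p := (· < v)) _ (hab.trans_le hv)] at this
        simpa using this
      · have : B.filter (· ≤ v) = 0 := by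
          rw [Multiset.filter_eq_nil]
          intro y hy hyv
          exact hv ((hbmin y (Multiset.mem_cons_of_mem hy)).trans hyv)
        simp [this]
    obtain ⟨C, hC, hCx, rfl, rfl⟩ := ih A B (by simpa using hk) (by simpa using hA) hbal
    have key : ∀ q ∈ C, b ≤ q.2 ∧ (q.1 < b → q.1 ≤ a) := fun q hq =>
      ⟨hbmin _ (Multiset.mem_cons_of_mem (Multiset.mem_map_of_mem _ hq)),
        hamax _ (Multiset.mem_cons_of_mem (Multiset.mem_map_of_mem _ hq))⟩
    refine ⟨(a, b) ::ₘ C, ?_, ?_, by simp, by simp⟩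
    · intro p hp
      rcases Multiset.mem_cons.1 hp with rfl | hp
      · exact hab
      · exact hC p hp
    · intro p hp q hq
      rcases Multiset.mem_cons.1 hp with rfl | hp <;> rcases Multiset.mem_cons.1 hq with rfl | hq
      · simp [colCross]
      · have := key q hq
        simp only [colCross]
        grind
      · have := key p hp
        simp only [colCross]
        grind
      · exact hCx p hp q hq

/-- Pylyavskyy.  For every `n ≥ 0` and every two-row rectangular
shape `(m,m)`, there is a content-preserving bijection between seminoncrossing tableaux
of shape `(m,m)` with entries at most `n` (encoded, since such tableaux are considered
up to permutation of columns, as multisets of `m` strictly increasing columns which are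
pairwise noncrossing as intervals) and semistandard tableaux of shape `(m,m)` with
entries at most `n`. -/
theorem statement4 (n m : ℕ) :
    ∃ e : {Cc : Multiset (Fin n × Fin n) //
            Multiset.card Cc = m ∧ (∀ p ∈ Cc, p.1 < p.2) ∧
            ∀ p ∈ Cc, ∀ q ∈ Cc, ¬ colCross p q} ≃
          {T : (Fin m → Fin n) × (Fin m → Fin n) // IsSSYT2 T},
      ∀ Cc v,
        Multiset.count v (Multiset.map Prod.fst Cc.1) +
            Multiset.count v (Multiset.map Prod.snd Cc.1) =
          (Finset.univ.filter (fun p => (e Cc).1.1 p = v)).card +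
            (Finset.univ.filter (fun p => (e Cc).1.2 p = v)).card := by
  have hex : ∀ Cc : {Cc : Multiset (Fin n × Fin n) //
      Multiset.card Cc = m ∧ (∀ p ∈ Cc, p.1 < p.2) ∧ ∀ p ∈ Cc, ∀ q ∈ Cc, ¬ colCross p q},
      ∃ T : {T : (Fin m → Fin n) × (Fin m → Fin n) // IsSSYT2 T},
        Multiset.map T.1.1 univ.val = Cc.1.map Prod.fst ∧
        Multiset.map T.1.2 univ.val = Cc.1.map Prod.snd := by
    rintro ⟨C, hm, hC, -⟩
    obtain ⟨f, hf, hfA⟩ := exists_monotone_map_eq (m := m) (C.map Prod.fst) (by simpa using hm)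
    obtain ⟨g, hg, hgB⟩ := exists_monotone_map_eq (m := m) (C.map Prod.snd) (by simpa using hm)
    have hb := ballot_of_columns C hC
    rw [← hfA, ← hgB] at hb
    exact ⟨⟨(f, g), fun i j h => hf h, fun i j h => hg h, fun i _ => lt_of_ballot hf hg hb i⟩,
      hfA, hgB⟩
  choose e he1 he2 using hex
  have hbij : Function.Bijective e := by
    constructor
    · intro C D h
      apply Subtype.ext
      refine noncrossing_unique C.1 D.1 C.2.2.1 C.2.2.2 D.2.2.1 D.2.2.2 ?_ ?_
      · rw [← he1, ← he1, h]
      · rw [← he2, ← he2, h]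
    · rintro ⟨⟨f, g⟩, hf, hg, hfg⟩
      obtain ⟨C, hC, hCx, hA, hB⟩ := noncrossing_exists (Multiset.map f univ.val)
        (Multiset.map g univ.val) (by simp) (ballot_of_lt fun i => hfg i i.2)
      have hm : C.card = m := by
        simpa using congrArg Multiset.card hA
      refine ⟨⟨C, hm, hC, hCx⟩, Subtype.ext (Prod.ext ?_ ?_)⟩
      · exact monotone_eq_of_map_eq (fun i j h => (e _).2.1 i j h) (fun i j h => hf i j h)
          ((he1 _).trans hA)
      · exact monotone_eq_of_map_eq (fun i j h => (e _).2.2.1 i j h) (fun i j h => hg i j h)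
          ((he2 _).trans hB)
  have hcount : ∀ (f : Fin m → Fin n) (v : Fin n),
      Multiset.count v (Multiset.map f univ.val) = (univ.filter fun p => f p = v).card := by
    intro f v
    rw [Multiset.count_map]
    simp only [eq_comm (a := v)]
    rfl
  refine ⟨Equiv.ofBijective e hbij, fun Cc v => ?_⟩
  rw [← he1, ← he2, hcount, hcount]
  rfl
end

section
/- Let n ≥ 3 and k ≥ 0. In the polynomial ring ℂ[y_1,…,y_n], the sum over all A-multidissections f of P_n with exactly k edges of the monomials Π_{{i,j}∈E_A} (y_i y_j)^{f({i,j})} is equal to the Schur polynomial s_{(k,k)}(y_1,…,y_n). -/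
/-!
Read the vertices in order and replace every edge by an opening bracket at its smaller endpoint
and a closing bracket at its larger one, closing brackets coming first at each vertex. A
multidissection with `k` edges then becomes a balanced word of `k` pairs of brackets, recorded by
the numbers `o v` and `c v` of brackets opened and closed at each vertex (`balanced`). Since
noncrossing edges are nested or disjoint, the word determines the multidissection, and every
balanced word arises (`eq_of_opens_closes`, `exists_noncross`, `bijOn_multidissections`).

On the other side, a weakly increasing row is determined by its content, and for two rows of
length `k` the columns are strict exactly when at most as many brackets are closed at vertices
`≤ v` as are opened at vertices `< v`, for all `v` (`columns_iff`). So tableaux of shape `(k,k)`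
also correspond to balanced words (`bijOn_tableaux`). In both correspondences the monomial is
`∏ v, x v ^ (o v + c v)`.
-/

open Finset

/-- Two chords `{i,j}` and `{a,b}` of a polygon whose vertices are labeled clockwise by
`ZMod m` (i.e. `0,1,…,m−1`) cross iff their endpoints strictly interleave in cyclic order:
writing the pairs in increasing order of labels as `{p,q}`, `{r,s}` with `p<q`, `r<s`,
they cross iff `p<r<q<s` or `r<p<s<q`. -/
def crossE {m : ℕ} (i j a b : ZMod m) : Prop :=
  (min i.val j.val < min a.val b.val ∧ min a.val b.val < max i.val j.val ∧
     max i.val j.val < max a.val b.val) ∨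
  (min a.val b.val < min i.val j.val ∧ min i.val j.val < max a.val b.val ∧
     max a.val b.val < max i.val j.val)

/-- An A-multidissection of the `n`-gon `P_n` (vertices labeled clockwise by `ZMod n`),
encoded as a symmetric function `f` on ordered pairs of vertices (`f i j` is the
multiplicity of the edge `{i,j}`): whenever two edges cross, one of them has
multiplicity `0`. -/
def IsAMulti (n : ℕ) (f : ZMod n → ZMod n → ℕ) : Prop :=
  (∀ i j, f i j = f j i) ∧ (∀ i, f i i = 0) ∧
  (∀ i j a b, crossE i j a b → f i j = 0 ∨ f a b = 0)

/-- The number of edges of an A-multidissection, counted with multiplicity. -/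
def aEdges (n : ℕ) (f : ZMod n → ZMod n → ℕ) : ℕ :=
  ∑ i ∈ Finset.range n, ∑ j ∈ Finset.range n,
    if i < j then f (i : ZMod n) (j : ZMod n) else 0

/-- The number of edges of `f`, with multiplicity, whose smaller endpoint is `v`. -/
def opens {n : ℕ} (f : Fin n → Fin n → ℕ) (v : Fin n) : ℕ := ∑ w ∈ Ioi v, f v w

/-- The number of edges of `f`, with multiplicity, whose larger endpoint is `v`. -/
def closes {n : ℕ} (f : Fin n → Fin n → ℕ) (v : Fin n) : ℕ := ∑ w ∈ Iio v, f w v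

/-- No two edges `{a,b}`, `{i,j}` of `f` interleave as `a < i < b < j`. Only the values
`f a b` with `a < b` matter. -/
def Noncross {n : ℕ} (f : Fin n → Fin n → ℕ) : Prop :=
  ∀ a i b j, a < i → i < b → b < j → f a b = 0 ∨ f i j = 0

/-- Pairs `(o, c)` for which the word that reads, at each vertex `v` in turn, `c v` closing
and then `o v` opening brackets is a balanced word with `k` pairs of brackets. -/
def balanced (n k : ℕ) : Set ((Fin n → ℕ) × (Fin n → ℕ)) :=
  {p | ∑ v, p.1 v = k ∧ ∑ v, p.2 v = k ∧ ∀ v, ∑ w ∈ Iic v, p.2 w ≤ ∑ w ∈ Iio v, p.1 w}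

/-! ### Noncrossing multigraphs and balanced words -/

lemma sum_closes {n : ℕ} (f : Fin n → Fin n → ℕ) : ∑ v, closes f v = ∑ v, opens f v := by
  simp only [closes, opens]
  exact Finset.sum_comm' (by simp)

lemma closes_le_opens {n : ℕ} (f : Fin n → Fin n → ℕ) (v : Fin n) :
    ∑ w ∈ Iic v, closes f w ≤ ∑ w ∈ Iio v, opens f w := by
  simp only [closes, opens]
  rw [Finset.sum_comm' (t' := Iio v) (s' := fun u => Ioc u v)]
  · refine Finset.sum_le_sum fun u _ => Finset.sum_le_sum_of_subset ?_
    intro w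
    simp +contextual
  · intro x y
    simp only [mem_Iic, mem_Iio, mem_Ioc]
    constructor
    · rintro ⟨h, h'⟩; exact ⟨⟨h', h⟩, lt_of_lt_of_le h' h⟩
    · rintro ⟨⟨h, h'⟩, _⟩; exact ⟨h', h⟩

/-- One half of the uniqueness of bracket matching: if `f` and `g` agree on all edges shorter
than `{i,j}` and `f i j > g i j`, then the equal totals at `i` and `j` force `g` to have edges
`{i,b}` with `b > j` and `{a,j}` with `a < i`, and these two cross. -/
lemma le_of_agree {n : ℕ} {f g : Fin n → Fin n → ℕ} (hg : Noncross g)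
    (ho : opens f = opens g) (hc : closes f = closes g) (i j : Fin n) (hij : i < j)
    (hs : ∀ a b : Fin n, a < b → (b : ℕ) - a < (j : ℕ) - i → f a b = g a b) :
    f i j ≤ g i j := by
  by_contra! hlt
  have h1 : ∃ b, j < b ∧ g i b ≠ 0 := by
    by_contra! h
    have : opens g i < opens f i := by
      refine Finset.sum_lt_sum (fun w hw => ?_) ⟨j, by simpa using hij, hlt⟩
      rw [mem_Ioi] at hw
      rcases lt_trichotomy w j with h' | rfl | h'
      · exact (hs i w hw (by omega)).ge
      · exact hlt.le
      · simp [h w h']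
    exact this.ne (congrFun ho i).symm
  have h2 : ∃ a, a < i ∧ g a j ≠ 0 := by
    by_contra! h
    have : closes g j < closes f j := by
      refine Finset.sum_lt_sum (fun w hw => ?_) ⟨i, by simpa using hij, hlt⟩
      rw [mem_Iio] at hw
      rcases lt_trichotomy w i with h' | rfl | h'
      · simp [h w h']
      · exact hlt.le
      · exact (hs w j hw (by omega)).ge
    exact this.ne (congrFun hc j).symm
  obtain ⟨b, hb, hgb⟩ := h1
  obtain ⟨a, ha, hga⟩ := h2
  exact (hg a i j b ha hij hb).elim hga hgb

/-- Uniqueness of bracket matching, by induction on the length `j - i` of an edge. -/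
lemma eq_of_opens_closes {n : ℕ} {f g : Fin n → Fin n → ℕ} (hf : Noncross f)
    (hg : Noncross g) (ho : opens f = opens g) (hc : closes f = closes g) :
    ∀ i j, i < j → f i j = g i j := by
  suffices H : ∀ d : ℕ, ∀ i j : Fin n, i < j → (j : ℕ) - i = d → f i j = g i j from
    fun i j h => H _ i j h rfl
  intro d
  induction d using Nat.strong_induction_on with
  | _ d ih =>
    rintro i j hij rfl
    exact le_antisymm
      (le_of_agree hg ho hc i j hij fun a b hab h => ih _ h a b hab rfl)
      (le_of_agree hf ho.symm hc.symm i j hij fun a b hab h => (ih _ h a b hab rfl).symm)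

/-- Existence of bracket matching, by induction on the number of brackets: join the first
closing bracket, at `j`, to the last opening bracket before it, at `i`, and match the rest. -/
lemma exists_noncross {n : ℕ} (k : ℕ) : ∀ o c : Fin n → ℕ, (o, c) ∈ balanced n k →
    ∃ f : Fin n → Fin n → ℕ, Noncross f ∧ opens f = o ∧ closes f = c := by
  induction k with
  | zero =>
    rintro o c ⟨h1, h2, -⟩
    refine ⟨fun _ _ => 0, fun _ _ _ _ _ _ _ => Or.inl rfl, ?_, ?_⟩
    · ext v; simpa [opens] using (Finset.sum_eq_zero_iff.1 h1 v (mem_univ v)).symm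
    · ext v; simpa [closes] using (Finset.sum_eq_zero_iff.1 h2 v (mem_univ v)).symm
  | succ k ih =>
    rintro o c ⟨h1, h2, h3⟩
    simp only at h1 h2 h3
    obtain ⟨j, hj, hjmin⟩ : ∃ j, c j ≠ 0 ∧ ∀ b < j, c b = 0 := by
      have hne : ∃ j, c j ≠ 0 := by
        by_contra! h
        simp [h] at h2
      obtain ⟨j, hj, hm⟩ := WellFounded.has_min (wellFounded_lt (α := Fin n)) {j | c j ≠ 0} hne
      exact ⟨j, hj, fun b hb => by_contra fun h => hm b h hb⟩
    obtain ⟨i, hij, hi, himax⟩ : ∃ i < j, o i ≠ 0 ∧ ∀ a, i < a → a < j → o a = 0 := by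
      have hne : ∃ i, i < j ∧ o i ≠ 0 := by
        by_contra! h
        have h4 := h3 j
        rw [Finset.sum_eq_zero (s := Iio j) (fun w hw => h w (mem_Iio.1 hw))] at h4
        have h5 := Finset.single_le_sum (f := c) (fun _ _ => Nat.zero_le _)
          (mem_Iic.2 (le_refl j))
        omega
      obtain ⟨i, hi, hm⟩ := WellFounded.has_min (wellFounded_gt (α := Fin n))
        {i | i < j ∧ o i ≠ 0} hne
      exact ⟨i, hi.1, hi.2, fun a ha haj => by_contra fun h => hm a ⟨haj, h⟩ ha⟩
    obtain ⟨o, rfl⟩ : ∃ o', o = fun v => o' v + if v = i then 1 else 0 :=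
      ⟨fun v => o v - if v = i then 1 else 0, by
        ext v; by_cases h : v = i
        · subst h; simp; omega
        · simp [h]⟩
    obtain ⟨c, rfl⟩ : ∃ c', c = fun v => c' v + if v = j then 1 else 0 :=
      ⟨fun v => c v - if v = j then 1 else 0, by
        ext v; by_cases h : v = j
        · subst h; simp; omega
        · simp [h]⟩
    simp only [Finset.sum_add_distrib, Finset.sum_ite_eq', mem_univ, if_true, mem_Iic, mem_Iio,
      Nat.add_right_cancel_iff] at h1 h2 h3
    beta_reduce at hjmin himax
    obtain ⟨f, hf, rfl, rfl⟩ := ih o c ⟨h1, h2, fun v => by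
      rcases lt_or_ge v j with hv | hv
      · rw [Finset.sum_eq_zero]
        · exact Nat.zero_le _
        · intro w hw
          exact (Nat.add_eq_zero_iff.1 (hjmin w (lt_of_le_of_lt (mem_Iic.1 hw) hv))).1
      · have := h3 v
        rw [if_pos hv, if_pos (lt_of_lt_of_le hij hv)] at this
        exact Nat.le_of_add_le_add_right this⟩
    refine ⟨fun a b => f a b + if a = i ∧ b = j then 1 else 0, ?_, ?_, ?_⟩
    · intro a p b q hap hpb hbq
      -- An old edge crossing the new one would close before `j`, or open between `i` and `j`.
      by_cases e1 : a = i ∧ b = j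
      · obtain ⟨rfl, rfl⟩ := e1
        right
        have h := himax p hap hpb
        have hle : f p q ≤ opens f p :=
          Finset.single_le_sum (f := f p) (fun _ _ => Nat.zero_le _)
            (mem_Ioi.2 (hpb.trans hbq))
        simp only [hap.ne', false_and, if_false]
        omega
      by_cases e2 : p = i ∧ q = j
      · obtain ⟨rfl, rfl⟩ := e2
        left
        have h := hjmin b hbq
        have hle : f a b ≤ closes f b :=
          Finset.single_le_sum (f := fun a => f a b) (fun _ _ => Nat.zero_le _)
            (mem_Iio.2 (hap.trans hpb))
        simp only [hap.ne, false_and, if_false]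
        omega
      · simpa [e1, e2] using hf a p b q hap hpb hbq
    · ext v
      by_cases h : v = i
      · subst h; simp [opens, Finset.sum_add_distrib, hij]
      · simp [opens, h]
    · ext v
      by_cases h : v = j
      · subst h; simp [closes, Finset.sum_add_distrib, hij]
      · simp [closes, h]

/-! ### Two-row tableaux and balanced words -/

/-- The content of a row `T`: how often each entry occurs in it. -/
def content {n k : ℕ} (T : Fin k → Fin n) (v : Fin n) : ℕ := #{p | T p = v}

lemma sum_content {n k : ℕ} (T : Fin k → Fin n) (s : Finset (Fin n)) :
    ∑ v ∈ s, content T v = #{p | T p ∈ s} := by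
  rw [Finset.card_eq_sum_card_fiberwise (f := T) (t := s) (fun p hp => by simpa using hp)]
  refine Finset.sum_congr rfl fun v hv => ?_
  unfold content
  congr 1
  ext p
  simp only [mem_filter, mem_univ, true_and]
  exact ⟨fun h => ⟨h ▸ hv, h⟩, fun h => h.2⟩

/-- A predicate on `Fin k` closed under going down holds on an initial segment, so it holds at
`p` exactly when it holds more than `p` times. -/
lemma iff_lt_card {k : ℕ} (P : Fin k → Prop) [DecidablePred P]
    (hP : ∀ p q, p ≤ q → P q → P p) (p : Fin k) : P p ↔ (p : ℕ) < #{q | P q} := by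
  constructor
  · intro h
    have : Iic p ⊆ ({q | P q} : Finset (Fin k)) := fun q hq => by
      simpa using hP q p (mem_Iic.1 hq) h
    have := Finset.card_le_card this
    rw [Fin.card_Iic] at this
    omega
  · intro h
    by_contra hp
    have : ({q | P q} : Finset (Fin k)) ⊆ Iio p := fun q hq => by
      rw [mem_Iio]
      by_contra! hqp
      exact hp (hP p q hqp (by simpa using hq))
    have := Finset.card_le_card this
    rw [Fin.card_Iio] at this
    omega

lemma content_injective {n k : ℕ} {S T : Fin k → Fin n} (hS : Monotone S) (hT : Monotone T)
    (h : content S = content T) : S = T := by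
  have key (p : Fin k) (v : Fin n) : S p ≤ v ↔ T p ≤ v := by
    rw [iff_lt_card (fun p => S p ≤ v) (fun p q hpq hq => (hS hpq).trans hq),
      iff_lt_card (fun p => T p ≤ v) (fun p q hpq hq => (hT hpq).trans hq)]
    have h1 := sum_content S (Iic v)
    have h2 := sum_content T (Iic v)
    simp only [mem_Iic] at h1 h2
    rw [← h1, ← h2, h]
  ext1 p
  exact le_antisymm ((key p _).2 le_rfl) ((key p _).1 le_rfl)

/-- Every content of total `k` is that of an increasing row: list the entries in any order,
then sort. -/
lemma exists_content {n k : ℕ} (o : Fin n → ℕ) (ho : ∑ v, o v = k) :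
    ∃ T : Fin k → Fin n, Monotone T ∧ content T = o := by
  have e : Fin k ≃ Σ v, Fin (o v) := Fintype.equivOfCardEq (by simp [ho])
  let T : Fin k → Fin n := fun p => (e p).1
  refine ⟨T ∘ Tuple.sort T, Tuple.monotone_sort T, ?_⟩
  ext v
  have h1 : content (T ∘ Tuple.sort T) v = content T v :=
    Finset.card_equiv (Tuple.sort T) (by simp)
  rw [h1]
  have h2 : content T v = #{x : Σ v, Fin (o v) | x.1 = v} :=
    Finset.card_equiv e (by simp [T])
  rw [h2]
  have h3 : ({x : Σ v, Fin (o v) | x.1 = v} : Finset _)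
      = (univ : Finset (Fin (o v))).map (Function.Embedding.sigmaMk v) := by
    ext ⟨w, x⟩
    simp only [mem_filter, mem_univ, true_and, mem_map, Function.Embedding.sigmaMk_apply]
    constructor
    · rintro rfl; exact ⟨x, rfl⟩
    · rintro ⟨y, hy⟩; exact (congrArg Sigma.fst hy).symm
  rw [h3]
  simp

/-- Column strictness of a tableau is the ballot condition on the contents of its rows. -/
lemma columns_iff {n k : ℕ} {S T : Fin k → Fin n} (hS : Monotone S) (hT : Monotone T) :
    (∀ p, S p < T p) ↔
      ∀ v, ∑ w ∈ Iic v, content T w ≤ ∑ w ∈ Iio v, content S w := by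
  simp only [sum_content, mem_Iic, mem_Iio]
  constructor
  · intro h v
    refine Finset.card_le_card fun p hp => ?_
    simp only [mem_filter, mem_univ, true_and] at hp ⊢
    exact (h p).trans_le hp
  · intro h p
    rw [iff_lt_card (fun q => S q < T p) (fun a b hab hb => (hS hab).trans_lt hb)]
    exact lt_of_lt_of_le ((iff_lt_card (fun q => T q ≤ T p)
      (fun a b hab hb => (hT hab).trans hb) p).1 le_rfl) (h (T p))

lemma isSSYT2_iff {n k : ℕ} (T : (Fin k → Fin n) × (Fin k → Fin n)) :
    IsSSYT2 T ↔ Monotone T.1 ∧ Monotone T.2 ∧ ∀ p, T.1 p < T.2 p :=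
  ⟨fun h => ⟨fun i j => h.1 i j, fun i j => h.2.1 i j, fun p => h.2.2 p p.2⟩,
    fun h => ⟨fun _ _ e => h.1 e, fun _ _ e => h.2.1 e, fun i _ => h.2.2 i⟩⟩

lemma bijOn_tableaux (n k : ℕ) :
    Set.BijOn (fun T : (Fin k → Fin n) × (Fin k → Fin n) => (content T.1, content T.2))
      {T | IsSSYT2 T} (balanced n k) := by
  refine ⟨?_, ?_, ?_⟩
  · intro T hT
    obtain ⟨h1, h2, h3⟩ := (isSSYT2_iff T).1 hT
    exact ⟨by simp [sum_content], by simp [sum_content], (columns_iff h1 h2).1 h3⟩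
  · intro S hS T hT h
    obtain ⟨h1, h2, -⟩ := (isSSYT2_iff S).1 hS
    obtain ⟨h1', h2', -⟩ := (isSSYT2_iff T).1 hT
    rw [Prod.mk.injEq] at h
    exact Prod.ext (content_injective h1 h1' h.1) (content_injective h2 h2' h.2)
  · rintro ⟨o, c⟩ ⟨h1, h2, h3⟩
    obtain ⟨S, hS, rfl⟩ := exists_content o h1
    obtain ⟨T, hT, rfl⟩ := exists_content c h2
    exact ⟨(S, T), (isSSYT2_iff _).2 ⟨hS, hT, (columns_iff hS hT).2 h3⟩, rfl⟩

lemma prod_content {R : Type*} [CommMonoid R] {n k : ℕ} (T : Fin k → Fin n) (x : Fin n → R) :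
    ∏ p, x (T p) = ∏ v, x v ^ content T v := by
  rw [← Finset.prod_fiberwise univ T]
  refine Finset.prod_congr rfl fun v _ => ?_
  rw [content, ← Finset.prod_const]
  exact Finset.prod_congr rfl fun p hp => by rw [(mem_filter.1 hp).2]

lemma schur2_eq {R : Type*} [CommSemiring R] (n k : ℕ) (x : Fin n → R) :
    schur2 n k k x = ∑ᶠ p ∈ balanced n k, ∏ v, x v ^ (p.1 v + p.2 v) := by
  classical
  have h : schur2 n k k x =
      ∑ᶠ T ∈ {T : (Fin k → Fin n) × (Fin k → Fin n) | IsSSYT2 T},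
        (∏ p, x (T.1 p)) * ∏ p, x (T.2 p) := by
    rw [finsum_mem_def, finsum_eq_sum_of_fintype, schur2]
    refine Finset.sum_congr rfl fun T _ => ?_
    rw [Set.indicator_apply]
    congr
  rw [h]
  refine finsum_mem_eq_of_bijOn _ (bijOn_tableaux n k) fun T _ => ?_
  simp only [prod_content, ← Finset.prod_mul_distrib, pow_add]

/-! ### Multidissections as noncrossing multigraphs -/

lemma aEdges_eq {m : ℕ} (f : Fin (m + 1) → Fin (m + 1) → ℕ) :
    aEdges (m + 1) f = ∑ v, opens f v := by
  simp only [aEdges, Finset.sum_range, opens]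
  refine Finset.sum_congr rfl fun i _ => ?_
  rw [← Finset.sum_filter]
  refine Finset.sum_congr (by ext; simp) fun j _ => ?_
  exact congrArg₂ f (Fin.cast_val_eq_self i) (Fin.cast_val_eq_self j)

lemma IsAMulti.noncross {m : ℕ} {f : Fin (m + 1) → Fin (m + 1) → ℕ}
    (hf : IsAMulti (m + 1) f) : Noncross f := by
  intro a i b j h1 h2 h3
  refine hf.2.2 a b i j (Or.inl ?_)
  change min (a : ℕ) b < min (i : ℕ) j ∧ min (i : ℕ) j < max (a : ℕ) b ∧
    max (a : ℕ) b < max (i : ℕ) j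
  omega

/-- The symmetric function on ordered pairs encoding the multigraph given by the values
`f a b` with `a < b`. -/
def symmetrize {n : ℕ} (f : Fin n → Fin n → ℕ) (a b : Fin n) : ℕ :=
  if a = b then 0 else f (min a b) (max a b)

lemma symmetrize_of_lt {n : ℕ} (f : Fin n → Fin n → ℕ) {a b : Fin n} (h : a < b) :
    symmetrize f a b = f a b := by
  simp [symmetrize, h.ne, h.le]

lemma symmetrize_comm {n : ℕ} (f : Fin n → Fin n → ℕ) (a b : Fin n) :
    symmetrize f a b = symmetrize f b a := by
  simp only [symmetrize, eq_comm (a := a), min_comm a, max_comm a]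

lemma isAMulti_symmetrize {m : ℕ} {f : Fin (m + 1) → Fin (m + 1) → ℕ} (hf : Noncross f) :
    IsAMulti (m + 1) (symmetrize f) := by
  refine ⟨symmetrize_comm f, fun i => if_pos rfl, fun i j a b h => ?_⟩
  · change Fin (m + 1) at i j a b
    have hv (x y : Fin (m + 1)) : ((min x y : Fin (m + 1)) : ℕ) = min (x : ℕ) y :=
      Fin.val_strictMono.monotone.map_min
    have hv' (x y : Fin (m + 1)) : ((max x y : Fin (m + 1)) : ℕ) = max (x : ℕ) y :=
      Fin.val_strictMono.monotone.map_max
    change (min (i : ℕ) j < min (a : ℕ) b ∧ min (a : ℕ) b < max (i : ℕ) j ∧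
        max (i : ℕ) j < max (a : ℕ) b) ∨
      (min (a : ℕ) b < min (i : ℕ) j ∧ min (i : ℕ) j < max (a : ℕ) b ∧
        max (a : ℕ) b < max (i : ℕ) j) at h
    simp only [← hv, ← hv', Fin.val_fin_lt] at h
    unfold symmetrize
    split_ifs
    · exact Or.inl rfl
    · exact Or.inl rfl
    · exact Or.inr rfl
    · rcases h with ⟨h1, h2, h3⟩ | ⟨h1, h2, h3⟩
      · exact hf _ _ _ _ h1 h2 h3
      · exact (hf _ _ _ _ h1 h2 h3).symm

lemma bijOn_multidissections (m k : ℕ) :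
    Set.BijOn (fun f : Fin (m + 1) → Fin (m + 1) → ℕ => (opens f, closes f))
      {f | IsAMulti (m + 1) f ∧ aEdges (m + 1) f = k} (balanced (m + 1) k) := by
  refine ⟨?_, ?_, ?_⟩
  · rintro f ⟨-, hk⟩
    rw [aEdges_eq] at hk
    exact ⟨hk, (sum_closes f).trans hk, closes_le_opens f⟩
  · rintro f ⟨hf, -⟩ g ⟨hg, -⟩ h
    rw [Prod.mk.injEq] at h
    have key := eq_of_opens_closes hf.noncross hg.noncross h.1 h.2
    funext i j
    rcases lt_trichotomy i j with hij | rfl | hij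
    · exact key i j hij
    · exact (hf.2.1 i).trans (hg.2.1 i).symm
    · exact (hf.1 i j).trans ((key j i hij).trans (hg.1 j i))
  · rintro ⟨o, c⟩ h
    obtain ⟨f, hf, rfl, rfl⟩ := exists_noncross k o c h
    have ho : opens (symmetrize f) = opens f := by
      ext v
      exact Finset.sum_congr rfl fun w hw => symmetrize_of_lt f (mem_Ioi.1 hw)
    have hc : closes (symmetrize f) = closes f := by
      ext v
      exact Finset.sum_congr rfl fun w hw => symmetrize_of_lt f (mem_Iio.1 hw)
    refine ⟨symmetrize f, ⟨isAMulti_symmetrize hf, ?_⟩, by simp only [ho, hc]⟩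
    rw [aEdges_eq, ho]
    exact h.1

/-- In the monomial of `f`, the exponent of the variable at `v` is the degree of `v` in `f`. -/
lemma prod_edges {R : Type*} [CommMonoid R] {n : ℕ} (f : Fin n → Fin n → ℕ) (x : Fin n → R) :
    ∏ i, ∏ j, (if i < j then (x i * x j) ^ f i j else 1) =
      ∏ v, x v ^ (opens f v + closes f v) := by
  simp only [← Finset.prod_filter, mul_pow, pow_add, Finset.prod_mul_distrib, opens, closes,
    ← Finset.prod_pow_eq_pow_sum]
  congr 1
  · exact Finset.prod_congr rfl fun i _ => Finset.prod_congr (by ext; simp) fun _ _ => rfl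
  · exact Finset.prod_comm' (by simp)

/-- Let `n ≥ 3` and `k ≥ 0`.  In `ℂ[y_1,…,y_n]` (variables indexed by
the vertices `ZMod n` of `P_n`), the sum over all A-multidissections `f` of `P_n` with
exactly `k` edges of `∏_{{i,j}} (y_i y_j)^{f({i,j})}` equals the Schur polynomial
`s_{(k,k)}(y_1,…,y_n)`. -/
theorem statement5 (n k : ℕ) (hn : 3 ≤ n) :
    (∑ᶠ (f : ZMod n → ZMod n → ℕ) (_ : IsAMulti n f ∧ aEdges n f = k),
        ∏ i ∈ Finset.range n, ∏ j ∈ Finset.range n,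
          if i < j then
            (MvPolynomial.X ((i : ℕ) : ZMod n) * MvPolynomial.X ((j : ℕ) : ZMod n) :
              MvPolynomial (ZMod n) ℂ) ^ f ((i : ℕ) : ZMod n) ((j : ℕ) : ZMod n)
          else 1) =
      schur2 n k k (fun i : Fin n => MvPolynomial.X ((i : ℕ) : ZMod n)) := by
  obtain ⟨m, rfl⟩ : ∃ m, n = m + 1 := ⟨n - 1, by omega⟩
  rw [schur2_eq]
  refine finsum_mem_eq_of_bijOn _ (bijOn_multidissections m k) fun f _ => ?_
  change Fin (m + 1) → Fin (m + 1) → ℕ at f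
  refine Eq.trans ?_ (prod_edges f _)
  simp only [Finset.prod_range]
  refine Finset.prod_congr rfl fun i _ => Finset.prod_congr rfl fun j _ => ?_
  have hf : f ((i : ℕ) : ZMod (m + 1)) ((j : ℕ) : ZMod (m + 1)) = f i j :=
    congrArg₂ f (Fin.cast_val_eq_self i) (Fin.cast_val_eq_self j)
  simp only [hf, Fin.val_fin_lt]
end

section
/- Fix n ≥ 3 and k ≥ 0, let X be the set of A-multidissections of P_n with exactly k edges, and let the cyclic group C = Z_n act on X by rotation. Then the triple (X, C, X(q)) exhibits the cyclic sieving phenomenon, where X(q) = q^{−k} s_{(k,k)}(1, q, …, q^{n−1}). Equivalently, for every d ≥ 0 the number of A-multidissections in X fixed by the d-th power of rotation equals ζ^{−dk} s_{(k,k)}(1, ζ^d, …, ζ^{(n−1)d}) with ζ = e^{2πi/n}. -/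
/-!
Write `n = N + 1` and let `W` be the span of the `2 × 2` minors (brackets) of a generic `2 × n`
matrix. Matrices act on the space `W ^ k` through the columns, and the cyclic sieving phenomenon comes
from computing the trace of one matrix on `W ^ k` in two bases.

* The bracket monomials of the A-multidissections with `k` edges form a basis (`pX`). They span
  because the Plücker relation uncrosses chords (`straighten_crosses`). They are independent because
  their lexicographic leading terms are distinct: such a term records how many edges start and end at
  each vertex, and a noncrossing configuration can be recovered from these numbers as a
  matching of parentheses can (`eq_of_degrees`).
* The standard monomials, indexed by the semistandard tableaux of shape `(k, k)`, form a basis (`pT`),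
  by the Plücker relation read in the direction that removes nestings (`straighten_nests`) and by the
  same leading term argument.

The cyclic shift of the columns with a sign at the wrap-around permutes the first basis exactly as
rotation permutes the multidissections, so the trace of its `d`-th power is the number of fixed points
(`trace_cyc`). Its eigenvalues are the `n` solutions of `x ^ n = -1`, namely `ω⁻¹ ζ ^ j` with
`ω ^ 2 = ζ`. Diagonal matrices act diagonally on the second basis, with trace the Schur polynomial
`s_(k,k)` (`trace_diagonal`), and the trace is invariant under conjugation (`trace_eq_schur`). As
`s_(k,k)` is homogeneous of degree `2 * k`, the factors `ω⁻¹` combine to `ζ ^ (-dk)`.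
-/

open Finset

namespace CSP
open MvPolynomial
open scoped Pointwise

/-! ### The bracket ring and the matrix action -/

/-- Polynomials in the entries of a generic `2 × (N+1)` matrix. The variables are ordered with the
whole first row before the second, which makes the lexicographic leading terms below work. -/
abbrev Pol (N : ℕ) := MvPolynomial (Fin 2 ×ₗ Fin (N + 1)) ℂ

/-- The entry of the generic matrix in row `s` and column `i`. -/
noncomputable def xv {N : ℕ} (s : Fin 2) (i : Fin (N + 1)) : Pol N := X (toLex (s, i))

/-- The Plücker bracket: the `2 × 2` minor of the generic matrix on the columns `e.1`, `e.2`. -/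
noncomputable def br {N : ℕ} (e : Fin (N + 1) × Fin (N + 1)) : Pol N :=
  xv 0 e.1 * xv 1 e.2 - xv 1 e.1 * xv 0 e.2

/-- The substitution replacing column `i` of the generic matrix by the combination
`∑ j, M i j • column j`. This reverses products of matrices, see `act_mul`. -/
noncomputable def act {N : ℕ} (M : Matrix (Fin (N + 1)) (Fin (N + 1)) ℂ) : Pol N →ₐ[ℂ] Pol N :=
  aeval fun v => ∑ j, M (ofLex v).2 j • xv (ofLex v).1 j

lemma act_xv {N : ℕ} (M : Matrix (Fin (N + 1)) (Fin (N + 1)) ℂ) (s : Fin 2) (i : Fin (N + 1)) :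
    act M (xv s i) = ∑ j, M i j • xv s j := by
  simp [act, xv]

lemma act_mul {N : ℕ} (M M' : Matrix (Fin (N + 1)) (Fin (N + 1)) ℂ) :
    act (M * M') = (act M').comp (act M) := by
  apply MvPolynomial.algHom_ext
  intro v
  obtain ⟨s, i⟩ := v
  change act (M * M') (xv s i) = act M' (act M (xv s i))
  simp only [act_xv, map_sum, map_smul, Finset.smul_sum, smul_smul, Matrix.mul_apply,
    Finset.sum_smul]
  exact Finset.sum_comm

lemma act_one {N : ℕ} : act (1 : Matrix (Fin (N + 1)) (Fin (N + 1)) ℂ) = AlgHom.id ℂ _ := by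
  apply MvPolynomial.algHom_ext
  intro v
  obtain ⟨s, i⟩ := v
  change act 1 (xv s i) = xv s i
  simp [act_xv, Matrix.one_apply]

lemma br_swap {N : ℕ} (i j : Fin (N + 1)) : br (i, j) = -br (j, i) := by
  simp only [br]; ring

lemma br_self {N : ℕ} (i : Fin (N + 1)) : br (i, i) = 0 := by
  simp only [br]; ring

lemma act_br {N : ℕ} (M : Matrix (Fin (N + 1)) (Fin (N + 1)) ℂ) (i j : Fin (N + 1)) :
    act M (br (i, j)) = ∑ a, ∑ b, (M i a * M j b) • br (a, b) := by
  simp only [br, map_sub, map_mul, act_xv, Finset.sum_mul_sum, smul_mul_smul_comm, smul_sub,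
    Finset.sum_sub_distrib]

/-- The span of the brackets. Its power `W N ^ k`, the degree-`k` part of the homogeneous coordinate
ring of the Grassmannian of planes, is the representation whose characters are compared. -/
noncomputable def W (N : ℕ) : Submodule ℂ (Pol N) := Submodule.span ℂ (Set.range br)

lemma act_W {N : ℕ} (M : Matrix (Fin (N + 1)) (Fin (N + 1)) ℂ) :
    (W N).map (act M).toLinearMap ≤ W N := by
  rw [W, Submodule.map_span_le]
  rintro _ ⟨⟨i, j⟩, rfl⟩
  change act M (br (i, j)) ∈ _
  rw [act_br]
  exact Submodule.sum_mem _ fun a _ => Submodule.sum_mem _ fun b _ =>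
    Submodule.smul_mem _ _ (Submodule.subset_span ⟨_, rfl⟩)

lemma act_mem {N k : ℕ} (M : Matrix (Fin (N + 1)) (Fin (N + 1)) ℂ) :
    ∀ p ∈ W N ^ k, (act M).toLinearMap p ∈ W N ^ k := by
  intro p hp
  have h : (W N ^ k).map (act M).toLinearMap ≤ W N ^ k := by
    rw [Submodule.map_pow]
    exact pow_le_pow_left' (act_W M) k
  exact h (Submodule.mem_map_of_mem hp)

/-- The action of a matrix on the degree-`k` part `W N ^ k`. -/
noncomputable def actV {N : ℕ} (k : ℕ) (M : Matrix (Fin (N + 1)) (Fin (N + 1)) ℂ) :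
    Module.End ℂ (W N ^ k : Submodule ℂ (Pol N)) :=
  (act M).toLinearMap.restrict (act_mem M)

lemma actV_mul {N k : ℕ} (M M' : Matrix (Fin (N + 1)) (Fin (N + 1)) ℂ) :
    actV k (M * M') = actV k M' * actV k M := by
  ext p
  simp [actV, act_mul]

lemma actV_one {N k : ℕ} : actV k (1 : Matrix (Fin (N + 1)) (Fin (N + 1)) ℂ) = 1 := by
  ext p
  simp [actV, act_one]

lemma trace_actV_conj {N k : ℕ} (P Q M : Matrix (Fin (N + 1)) (Fin (N + 1)) ℂ) (h : P * Q = 1) :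
    LinearMap.trace ℂ _ (actV k (Q * M * P)) = LinearMap.trace ℂ _ (actV k M) := by
  rw [actV_mul, actV_mul, ← mul_assoc, LinearMap.trace_mul_comm, ← mul_assoc, ← actV_mul, h,
    actV_one, one_mul]

/-! ### Straightening -/

/-- The product of the brackets of a multiset of chords. -/
noncomputable def mprod {N : ℕ} (m : Multiset (Fin (N + 1) × Fin (N + 1))) : Pol N :=
  (m.map br).prod

lemma W_eq {N : ℕ} : W N = Submodule.span ℂ (br '' {e | e.1 < e.2}) := by
  apply le_antisymm
  · rw [W, Submodule.span_le]
    rintro _ ⟨⟨i, j⟩, rfl⟩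
    rcases lt_trichotomy i j with h | h | h
    · exact Submodule.subset_span ⟨_, h, rfl⟩
    · subst h; rw [br_self]; exact Submodule.zero_mem _
    · rw [br_swap]; exact Submodule.neg_mem _ (Submodule.subset_span ⟨(j, i), h, rfl⟩)
  · exact Submodule.span_mono (Set.image_subset_range _ _)

lemma pow_W_le {N k : ℕ} : W N ^ k ≤
    Submodule.span ℂ {p | ∃ m : Multiset (Fin (N + 1) × Fin (N + 1)),
      m.card = k ∧ (∀ e ∈ m, e.1 < e.2) ∧ mprod m = p} := by
  rw [W_eq, Submodule.span_pow]
  apply Submodule.span_mono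
  induction k with
  | zero =>
    intro p hp
    rw [pow_zero, Set.mem_one] at hp
    exact ⟨0, rfl, by simp, by simp [mprod, hp]⟩
  | succ k ih =>
    intro p hp
    rw [pow_succ, Set.mem_mul] at hp
    obtain ⟨q, hq, _, ⟨e, he, rfl⟩, rfl⟩ := hp
    obtain ⟨m, hm, hv, rfl⟩ := ih hq
    refine ⟨e ::ₘ m, by simp [hm], ?_, by simp [mprod, mul_comm]⟩
    intro e' he'
    rcases Multiset.mem_cons.1 he' with rfl | h
    · exact he
    · exact hv _ h

/-- A straightening principle: if every product of two brackets in the irreflexive relation `R` can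
be rewritten as a combination of two products of smaller total measure `μ`, then the bracket
monomials in which no two chords are related by `R` span `W N ^ k`. -/
lemma straighten {N : ℕ} (R : Fin (N + 1) × Fin (N + 1) → Fin (N + 1) × Fin (N + 1) → Prop)
    (hR : ∀ e, ¬ R e e) (μ : Fin (N + 1) × Fin (N + 1) → ℕ)
    (h : ∀ e e' : Fin (N + 1) × Fin (N + 1), e.1 < e.2 → e'.1 < e'.2 → R e e' →
      ∃ a b c d : Fin (N + 1) × Fin (N + 1), ∃ s t : ℂ,
        (a.1 < a.2 ∧ b.1 < b.2 ∧ c.1 < c.2 ∧ d.1 < d.2) ∧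
        br e * br e' = s • (br a * br b) + t • (br c * br d) ∧
        μ a + μ b < μ e + μ e' ∧ μ c + μ d < μ e + μ e') (k : ℕ) :
    W N ^ k ≤ Submodule.span ℂ {p | ∃ m : Multiset (Fin (N + 1) × Fin (N + 1)),
      m.card = k ∧ (∀ e ∈ m, e.1 < e.2) ∧ (∀ e ∈ m, ∀ e' ∈ m, ¬ R e e') ∧ mprod m = p} := by
  refine pow_W_le.trans ?_
  rw [Submodule.span_le]
  rintro _ ⟨m, hk, hv, rfl⟩
  induction hn : (m.map μ).sum using Nat.strong_induction_on generalizing m with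
  | _ n ih =>
  by_cases hg : ∀ e ∈ m, ∀ e' ∈ m, ¬ R e e'
  · exact Submodule.subset_span ⟨m, hk, hv, hg, rfl⟩
  push Not at hg
  obtain ⟨e, he, e', he', hee⟩ := hg
  obtain ⟨m₁, rfl⟩ := Multiset.exists_cons_of_mem he
  have hne : e' ≠ e := by rintro rfl; exact hR _ hee
  obtain ⟨m₂, rfl⟩ := Multiset.exists_cons_of_mem ((Multiset.mem_cons.1 he').resolve_left hne)
  obtain ⟨a, b, c, d, s, t, ⟨ha, hb, hc, hd⟩, heq, h1, h2⟩ :=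
    h e e' (hv _ he) (hv _ he') hee
  have key : mprod (e ::ₘ e' ::ₘ m₂) =
      s • mprod (a ::ₘ b ::ₘ m₂) + t • mprod (c ::ₘ d ::ₘ m₂) := by
    simp only [mprod, Multiset.map_cons, Multiset.prod_cons, ← mul_assoc]
    rw [heq, add_mul, smul_mul_assoc, smul_mul_assoc]
  simp only [Multiset.mem_cons, forall_eq_or_imp, Multiset.card_cons, Multiset.map_cons,
    Multiset.sum_cons] at hv hk hn
  rw [SetLike.mem_coe, key]
  refine Submodule.add_mem _ (Submodule.smul_mem _ _ ?_) (Submodule.smul_mem _ _ ?_)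
  · refine ih _ ?_ _ ?_ ?_ rfl
    · simp only [Multiset.map_cons, Multiset.sum_cons]; omega
    · simpa using hk
    · simp only [Multiset.mem_cons, forall_eq_or_imp]; exact ⟨ha, hb, hv.2.2⟩
  · refine ih _ ?_ _ ?_ ?_ rfl
    · simp only [Multiset.map_cons, Multiset.sum_cons]; omega
    · simpa using hk
    · simp only [Multiset.mem_cons, forall_eq_or_imp]; exact ⟨hc, hd, hv.2.2⟩

/-- The chords `e` and `e'` cross, with `e` starting first. -/
def Crosses {N : ℕ} (e e' : Fin (N + 1) × Fin (N + 1)) : Prop :=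
  e.1 < e'.1 ∧ e'.1 < e.2 ∧ e.2 < e'.2

/-- The chord `e'` lies strictly inside `e`, with no common endpoint. -/
def Nests {N : ℕ} (e e' : Fin (N + 1) × Fin (N + 1)) : Prop :=
  e.1 < e'.1 ∧ e'.2 < e.2

/-- With `p, q, r` the three gaps between the four endpoints of two crossing chords, both ways of
uncrossing decrease the total of `L * (2 * M - L)` over the chord lengths `L`. This function is
increasing, which settles the first replacement, and strictly concave, which settles the second. -/
lemma concave_length (p q r M : ℕ) (hp : 0 < p) (hq : 0 < q) (hr : 0 < r) (h : p + q + r ≤ M) :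
    p * (2 * M - p) + r * (2 * M - r) <
      (p + q) * (2 * M - (p + q)) + (q + r) * (2 * M - (q + r)) ∧
    (p + q + r) * (2 * M - (p + q + r)) + q * (2 * M - q) <
      (p + q) * (2 * M - (p + q)) + (q + r) * (2 * M - (q + r)) := by
  obtain ⟨z, rfl⟩ := Nat.exists_eq_add_of_le h
  zify
  rw [Nat.cast_sub (by omega), Nat.cast_sub (by omega), Nat.cast_sub (by omega),
    Nat.cast_sub (by omega), Nat.cast_sub (by omega), Nat.cast_sub (by omega)]
  push_cast
  constructor <;> nlinarith [mul_pos hp hr, mul_pos hp hq, mul_pos hq hr, mul_pos hq hq]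

/-- Uncrossing by the Plücker relation `[ac][bd] = [ab][cd] + [ad][bc]`. -/
lemma straighten_crosses (N k : ℕ) :
    W N ^ k ≤ Submodule.span ℂ {p | ∃ m : Multiset (Fin (N + 1) × Fin (N + 1)),
      m.card = k ∧ (∀ e ∈ m, e.1 < e.2) ∧ (∀ e ∈ m, ∀ e' ∈ m, ¬ Crosses e e') ∧
        mprod m = p} := by
  refine straighten Crosses (fun e he => lt_irrefl _ he.1)
    (fun e => (e.2 - e.1 : ℕ) * (2 * (N + 1) - (e.2 - e.1 : ℕ))) ?_ k
  rintro ⟨a, c⟩ ⟨b, d⟩ - - ⟨h1, h2, h3⟩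
  replace h1 : a < b := h1
  replace h2 : b < c := h2
  replace h3 : c < d := h3
  refine ⟨(a, b), (c, d), (a, d), (b, c), 1, 1,
    ⟨h1, h3, h1.trans (h2.trans h3), h2⟩, ?_, ?_, ?_⟩
  · simp only [br, one_smul]; ring
  · have := (concave_length (b - a) (c - b) (d - c) (N + 1) (by omega) (by omega)
      (by omega) (by omega)).1
    rwa [show (c - a : ℕ) = (b - a) + (c - b) by omega,
      show (d - b : ℕ) = (c - b) + (d - c) by omega]
  · have := (concave_length (b - a) (c - b) (d - c) (N + 1) (by omega) (by omega)
      (by omega) (by omega)).2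
    rwa [show (c - a : ℕ) = (b - a) + (c - b) by omega,
      show (d - b : ℕ) = (c - b) + (d - c) by omega,
      show (d - a : ℕ) = (b - a) + (c - b) + (d - c) by omega]

/-- The Plücker relation `[ad][bc] = [ac][bd] - [ab][cd]` removes nestings; the sum of the squared
lengths drops, as squaring is convex. -/
lemma straighten_nests (N k : ℕ) :
    W N ^ k ≤ Submodule.span ℂ {p | ∃ m : Multiset (Fin (N + 1) × Fin (N + 1)),
      m.card = k ∧ (∀ e ∈ m, e.1 < e.2) ∧ (∀ e ∈ m, ∀ e' ∈ m, ¬ Nests e e') ∧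
        mprod m = p} := by
  refine straighten Nests (fun e he => lt_irrefl _ he.1) (fun e => (e.2 - e.1 : ℕ) ^ 2) ?_ k
  rintro ⟨a, d⟩ ⟨b, c⟩ - h0 ⟨h1, h2⟩
  replace h0 : b < c := h0
  replace h1 : a < b := h1
  replace h2 : c < d := h2
  refine ⟨(a, c), (b, d), (a, b), (c, d), 1, -1,
    ⟨h1.trans h0, h0.trans h2, h1, h2⟩, ?_, ?_, ?_⟩
  · simp only [br, one_smul, neg_smul]; ring
  all_goals
    obtain ⟨a, ha⟩ := a
    obtain ⟨b, hb⟩ := b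
    obtain ⟨c, hc⟩ := c
    obtain ⟨d, hd⟩ := d
    simp only [Fin.mk_lt_mk] at *
    obtain ⟨p, rfl⟩ := Nat.exists_eq_add_of_lt h1
    obtain ⟨q, rfl⟩ := Nat.exists_eq_add_of_lt h0
    obtain ⟨r, rfl⟩ := Nat.exists_eq_add_of_lt h2
    zify
    rw [Nat.cast_sub (by omega), Nat.cast_sub (by omega), Nat.cast_sub (by omega),
      Nat.cast_sub (by omega)]
    push_cast
    nlinarith [mul_nonneg (Int.natCast_nonneg p) (Int.natCast_nonneg r),
      mul_nonneg (Int.natCast_nonneg p) (Int.natCast_nonneg q),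
      mul_nonneg (Int.natCast_nonneg q) (Int.natCast_nonneg r)]

/-! ### Standard monomials and tableaux -/

/-- Nonzero polynomials with pairwise distinct leading exponents are linearly independent: in a
nontrivial combination the largest leading term cannot cancel. -/
lemma linearIndependent_of_degree {σ ι : Type*} (mo : MonomialOrder σ)
    (p : ι → MvPolynomial σ ℂ) (h0 : ∀ i, p i ≠ 0)
    (hinj : Function.Injective fun i => mo.degree (p i)) : LinearIndependent ℂ p := by
  classical
  rw [linearIndependent_iff']
  intro s g hs
  by_contra! hne
  obtain ⟨i₀, hi₀, hg₀⟩ := hne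
  obtain ⟨i, hi, hmax⟩ := Finset.exists_max_image (s.filter (g · ≠ 0))
    (fun i => mo.toSyn (mo.degree (p i))) ⟨i₀, by simp [hi₀, hg₀]⟩
  rw [Finset.mem_filter] at hi
  have h := congrArg (coeff (mo.degree (p i))) hs
  rw [coeff_sum, Finset.sum_eq_single i] at h
  · rw [coeff_smul, coeff_zero, smul_eq_mul] at h
    exact (mul_ne_zero hi.2 (mo.coeff_degree_ne_zero_iff.2 (h0 i))) h
  · intro j hj hji
    rw [coeff_smul]
    by_cases hgj : g j = 0
    · rw [hgj, zero_smul]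
    · rw [mo.coeff_eq_zero_of_lt, smul_zero]
      refine lt_of_le_of_ne (hmax j (by simp [hj, hgj])) fun he => hji (hinj ?_)
      exact mo.toSyn.injective he
  · exact fun h => absurd hi.1 h

/-- The exponent of the product of the diagonal entries of the minor on the columns `e.1`, `e.2`. -/
noncomputable def lead {N : ℕ} (e : Fin (N + 1) × Fin (N + 1)) : (Fin 2 ×ₗ Fin (N + 1)) →₀ ℕ :=
  Finsupp.single (toLex (0, e.1)) 1 + Finsupp.single (toLex (1, e.2)) 1

lemma xv_ne_zero {N : ℕ} (s : Fin 2) (i : Fin (N + 1)) : xv s i ≠ 0 := X_ne_zero _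

/-- For `e.1 < e.2` the diagonal term of the minor is its leading term. -/
lemma degree_br {N : ℕ} (e : Fin (N + 1) × Fin (N + 1)) (h : e.1 < e.2) :
    MonomialOrder.lex.degree (br e) = lead e := by
  have hx : ∀ i j : Fin (N + 1), MonomialOrder.lex.degree (xv 0 i * xv 1 j) = lead (i, j) := by
    intro i j
    rw [MonomialOrder.degree_mul (xv_ne_zero _ _) (xv_ne_zero _ _), xv, xv,
      MonomialOrder.degree_X, MonomialOrder.degree_X, lead]
  rw [br, MonomialOrder.degree_sub_of_lt, hx]
  rw [mul_comm (xv 1 e.1), hx, hx, MonomialOrder.lex_lt_iff, Finsupp.Lex.lt_iff]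
  refine ⟨toLex (0, e.1), ?_, ?_⟩
  · intro v hv
    obtain ⟨s, i⟩ := v
    have hv' : s = 0 ∧ i < e.1 := by
      rcases (Prod.Lex.lt_iff).1 hv with h | h
      · exact absurd h (by simp)
      · exact h
    obtain ⟨rfl, hi⟩ := hv'
    have h1 : e.1 ≠ i := hi.ne'
    have h2 : e.2 ≠ i := (hi.trans h).ne'
    change lead (e.2, e.1) (toLex (0, i)) = lead (e.1, e.2) (toLex (0, i))
    simp [lead, h1, h2]
  · simp [lead, h.ne']

lemma br_ne_zero {N : ℕ} (e : Fin (N + 1) × Fin (N + 1)) (h : e.1 < e.2) : br e ≠ 0 := by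
  intro h0
  have := degree_br e h
  rw [h0, MonomialOrder.degree_zero] at this
  have := DFunLike.congr_fun this (toLex (0, e.1))
  simp [lead] at this

/-- A weakly increasing sequence is determined by its content. -/
lemma eq_of_monotone {α : Type*} [LinearOrder α] {k : ℕ} (s t : Fin k → α) (hs : Monotone s)
    (ht : Monotone t) (h : ∀ j, #{i | s i = j} = #{i | t i = j}) : s = t := by
  apply List.ofFn_injective
  refine List.Perm.eq_of_sortedLE hs.sortedLE_ofFn ht.sortedLE_ofFn ?_
  rw [← Multiset.coe_eq_coe, ← Fin.univ_val_map, ← Fin.univ_val_map]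
  ext j
  rw [Multiset.count_map, Multiset.count_map]
  simpa only [Finset.card, Finset.filter_val, eq_comm] using h j

/-- The standard monomial of a two-row tableau: the product of the brackets of its columns. -/
noncomputable def pT {N k : ℕ}
    (T : {T : (Fin k → Fin (N + 1)) × (Fin k → Fin (N + 1)) // IsSSYT2 T}) : Pol N :=
  ∏ i, br (T.1.1 i, T.1.2 i)

lemma ssyt_lt {N k : ℕ}
    (T : {T : (Fin k → Fin (N + 1)) × (Fin k → Fin (N + 1)) // IsSSYT2 T}) (i : Fin k) :
    T.1.1 i < T.1.2 i := T.2.2.2 i i.2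

/-- The leading exponent of a standard monomial records the contents of both rows of the tableau, and
these determine the tableau. -/
lemma linearIndependent_pT (N k : ℕ) : LinearIndependent ℂ (pT : _ → Pol N)
    (ι := {T : (Fin k → Fin (N + 1)) × (Fin k → Fin (N + 1)) // IsSSYT2 T}) := by
  have hd : ∀ T : {T : (Fin k → Fin (N + 1)) × (Fin k → Fin (N + 1)) // IsSSYT2 T},
      MonomialOrder.lex.degree (pT T) = ∑ i, lead (T.1.1 i, T.1.2 i) := by
    intro T
    rw [pT, MonomialOrder.degree_prod fun i _ => br_ne_zero _ (ssyt_lt T i)]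
    exact Finset.sum_congr rfl fun i _ => degree_br _ (ssyt_lt T i)
  refine linearIndependent_of_degree MonomialOrder.lex _
    (fun T => Finset.prod_ne_zero_iff.2 fun i _ => br_ne_zero _ (ssyt_lt T i)) ?_
  intro S T h
  simp only [hd] at h
  ext1
  refine Prod.ext (eq_of_monotone _ _ (fun i j => S.2.1 i j) (fun i j => T.2.1 i j) fun v => ?_)
    (eq_of_monotone _ _ (fun i j => S.2.2.1 i j) (fun i j => T.2.2.1 i j) fun v => ?_)
  · simpa [lead, Finsupp.finsetSum_apply, Finsupp.single_apply, Finset.sum_add_distrib,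
      ← Finset.card_filter] using DFunLike.congr_fun h (toLex (0, v))
  · simpa [lead, Finsupp.finsetSum_apply, Finsupp.single_apply, Finset.sum_add_distrib,
      ← Finset.card_filter] using DFunLike.congr_fun h (toLex (1, v))

/-- A non-nesting multiset of chords, sorted lexicographically, is the list of columns of a
semistandard tableau, so `straighten_nests` says that the standard monomials span. -/
lemma pow_W_le_pT (N k : ℕ) : W N ^ k ≤ Submodule.span ℂ (Set.range (pT (N := N) (k := k))) := by
  refine (straighten_nests N k).trans (Submodule.span_mono ?_)
  rintro _ ⟨m, hk, hv, hn, rfl⟩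
  set l : List (Fin (N + 1) ×ₗ Fin (N + 1)) := (m.map toLex).sort (· ≤ ·) with hl
  have hlm : (l : Multiset _) = m.map toLex := Multiset.sort_eq _ _
  have hlk : l.length = k := by rw [hl, Multiset.length_sort, Multiset.card_map, hk]
  have hsort : l.SortedLE := by
    exact (Multiset.pairwise_sort _ _).sortedLE
  have hmem : ∀ e ∈ l, ofLex e ∈ m := by
    intro e he
    rw [← Multiset.mem_coe, hlm, Multiset.mem_map] at he
    obtain ⟨x, hx, rfl⟩ := he
    exact hx
  subst hlk
  have hle : ∀ i j : Fin l.length, i ≤ j → l.get i ≤ l.get j := fun i j hij => hsort.monotone_get hij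
  refine ⟨⟨(fun i => (ofLex (l.get i)).1, fun i => (ofLex (l.get i)).2), ?_, ?_, ?_⟩, ?_⟩
  · intro i j hij
    exact (Prod.Lex.le_iff.1 (hle i j hij)).elim le_of_lt (fun h => h.1.le)
  · intro i j hij
    rcases Prod.Lex.le_iff.1 (hle i j hij) with h | h
    · by_contra! hlt
      exact hn _ (hmem _ (l.get_mem i)) _ (hmem _ (l.get_mem j)) ⟨h, hlt⟩
    · exact h.2
  · intro i h
    exact hv _ (hmem _ (l.get_mem i))
  · have : mprod m = (l.map fun e => br (ofLex e)).prod := by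
      rw [← Multiset.prod_coe, ← Multiset.map_coe, hlm, Multiset.map_map]
      rfl
    rw [this]
    exact Fin.prod_univ_fun_getElem l fun e => br (ofLex e)

/-! ### Multidissections, rotation and the signed cyclic matrix -/

/-- The edges of the polygon, as pairs in increasing order. -/
def edges (N : ℕ) : Finset (Fin (N + 1) × Fin (N + 1)) := Finset.univ.filter fun e => e.1 < e.2

lemma mem_edges {N : ℕ} {e : Fin (N + 1) × Fin (N + 1)} : e ∈ edges N ↔ e.1 < e.2 := by
  simp [edges]

/-- `f` is an A-multidissection of the `(N+1)`-gon with `k` edges. The vertices are `Fin (N + 1)` and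
the crossing condition is stated for endpoints in increasing order. -/
structure IsX (N k : ℕ) (f : Fin (N + 1) → Fin (N + 1) → ℕ) : Prop where
  symm : ∀ i j, f i j = f j i
  diag : ∀ i, f i i = 0
  noncross : ∀ a b c d, a < b → b < c → c < d → f a c = 0 ∨ f b d = 0
  card : ∑ e ∈ edges N, f e.1 e.2 = k

/-- Rotation of a multidissection by one step. -/
def rot {N : ℕ} (f : Fin (N + 1) → Fin (N + 1) → ℕ) : Fin (N + 1) → Fin (N + 1) → ℕ :=
  fun i j => f (i - 1) (j - 1)

/-- A product of a symmetric function over the edges is unchanged when all edges are rotated. -/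
@[to_additive]
lemma prod_edges_rot {N : ℕ} {M : Type*} [CommMonoid M] (G : Fin (N + 1) → Fin (N + 1) → M)
    (hG : ∀ i j, G i j = G j i) :
    ∏ e ∈ edges N, G (e.1 + 1) (e.2 + 1) = ∏ e ∈ edges N, G e.1 e.2 := by
  refine Finset.prod_nbij' (fun e => (min (e.1 + 1) (e.2 + 1), max (e.1 + 1) (e.2 + 1)))
    (fun e => (min (e.1 - 1) (e.2 - 1), max (e.1 - 1) (e.2 - 1))) ?_ ?_ ?_ ?_ ?_
  · rintro ⟨i, j⟩ h
    rw [mem_edges] at h ⊢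
    simpa [min_lt_max] using h.ne'
  · rintro ⟨i, j⟩ h
    rw [mem_edges] at h ⊢
    simpa [min_lt_max] using h.ne'
  · rintro ⟨i, j⟩ h
    replace h : i < j := mem_edges.1 h
    rcases le_total (i + 1) (j + 1) with h' | h' <;> simp [h', h.le]
  · rintro ⟨i, j⟩ h
    replace h : i < j := mem_edges.1 h
    rcases le_total (i - 1) (j - 1) with h' | h' <;> simp [h', h.le]
  · rintro ⟨i, j⟩ -
    rcases le_total (i + 1) (j + 1) with h' | h'
    · simp [h']
    · simp [h', hG (i + 1)]

lemma IsX.rot {N k : ℕ} {f : Fin (N + 1) → Fin (N + 1) → ℕ} (hf : IsX N k f) :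
    IsX N k (rot f) where
  symm i j := hf.symm _ _
  diag i := hf.diag _
  noncross a b c d hab hbc hcd := by
    have hb := Fin.coe_sub_one b
    have hc := Fin.coe_sub_one c
    have hd := Fin.coe_sub_one d
    rw [if_neg (Fin.ne_zero_of_lt hab)] at hb
    rw [if_neg (Fin.ne_zero_of_lt hbc)] at hc
    rw [if_neg (Fin.ne_zero_of_lt hcd)] at hd
    have ha := Fin.coe_sub_one a
    simp only [Fin.lt_def] at hab hbc hcd
    simp only [CSP.rot]
    split_ifs at ha with h0
    -- a chord at vertex `0` becomes a chord at the last vertex, so the four endpoints are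
    -- cyclically reordered
    · rw [hf.symm (a - 1)]
      refine (hf.noncross (b - 1) (c - 1) (d - 1) (a - 1) ?_ ?_ ?_).symm <;>
        rw [Fin.lt_def] <;> omega
    · have : (a : ℕ) ≠ 0 := fun h => h0 (Fin.ext h)
      apply hf.noncross <;> rw [Fin.lt_def] <;> omega
  card := by
    rw [← hf.card, ← sum_edges_rot (CSP.rot f) fun i j => hf.symm _ _]
    simp [CSP.rot]

/-- The bracket monomial of a multidissection. -/
noncomputable def pX {N : ℕ} (f : Fin (N + 1) → Fin (N + 1) → ℕ) : Pol N :=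
  ∏ e ∈ edges N, br e ^ f e.1 e.2

/-- The signed cyclic shift: column `i` becomes column `i + 1`, with a sign at the wrap-around. The
sign makes up for the reversal of the endpoints of an edge `{i, N}`, see `act_cyc_br`. -/
def cyc (N : ℕ) : Matrix (Fin (N + 1)) (Fin (N + 1)) ℂ :=
  fun i j => if j = i + 1 then (if i = Fin.last N then -1 else 1) else 0

lemma act_cyc_xv {N : ℕ} (s : Fin 2) (i : Fin (N + 1)) :
    act (cyc N) (xv s i) = (if i = Fin.last N then -1 else 1 : ℂ) • xv s (i + 1) := by
  rw [act_xv, Finset.sum_eq_single (i + 1)]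
  · simp [cyc]
  · intro j _ hj
    simp [cyc, hj]
  · simp

/-- The signed cyclic shift permutes the brackets of the edges without signs. -/
lemma act_cyc_br {N : ℕ} (i j : Fin (N + 1)) (h : i < j) :
    act (cyc N) (br (i, j)) = br (min (i + 1) (j + 1), max (i + 1) (j + 1)) := by
  have hi : i ≠ Fin.last N := (h.trans_le (Fin.le_last j)).ne
  by_cases hj : j = Fin.last N
  · subst hj
    simp only [br, map_sub, map_mul, act_cyc_xv, hi, if_true, if_false, Fin.last_add_one,
      min_eq_right (Fin.zero_le _), max_eq_left (Fin.zero_le _), one_smul, neg_smul]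
    ring
  · have h' : i + 1 < j + 1 := by
      rw [Fin.lt_def, Fin.val_add_one_of_lt (Fin.lt_last_iff_ne_last.2 hi),
        Fin.val_add_one_of_lt (Fin.lt_last_iff_ne_last.2 hj)]
      simpa using h
    simp only [br, map_sub, map_mul, act_cyc_xv, hi, hj, if_false, min_eq_left h'.le,
      max_eq_right h'.le, one_smul]

lemma act_cyc_pX {N : ℕ} (f : Fin (N + 1) → Fin (N + 1) → ℕ) (hf : ∀ i j, f i j = f j i) :
    act (cyc N) (pX f) = pX (rot f) := by
  have h1 : pX (rot f) =
      ∏ e ∈ edges N, br (min e.1 e.2, max e.1 e.2) ^ rot f e.1 e.2 := by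
    refine Finset.prod_congr rfl fun e he => ?_
    rw [mem_edges] at he
    rw [min_eq_left he.le, max_eq_right he.le]
  rw [h1, ← prod_edges_rot (fun i j => br (min i j, max i j) ^ rot f i j)
    fun i j => by rw [min_comm, max_comm, rot, rot, hf], pX, map_prod]
  refine Finset.prod_congr rfl fun e he => ?_
  rw [map_pow, act_cyc_br _ _ (mem_edges.1 he)]
  simp [rot]

lemma prod_br_mem {N : ℕ} {ι : Type*} (s : Finset ι) (e : ι → Fin (N + 1) × Fin (N + 1))
    (f : ι → ℕ) : ∏ i ∈ s, br (e i) ^ f i ∈ W N ^ ∑ i ∈ s, f i := by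
  classical
  induction s using Finset.induction_on with
  | empty =>
    simp only [Finset.prod_empty, Finset.sum_empty, pow_zero]
    exact Submodule.one_le.1 le_rfl
  | insert a s ha ih =>
    rw [Finset.prod_insert ha, Finset.sum_insert ha, pow_add]
    have h : br (e a) ∈ W N := Submodule.subset_span ⟨_, rfl⟩
    exact Submodule.mul_mem_mul (Submodule.pow_mem_pow _ h _) ih

/-! ### Noncrossing monomials -/

/-- The uniqueness of a matching of parentheses. Suppose that `f` is noncrossing, that `f` and `g`
have the same number of edges starting at each vertex and ending at each vertex, and that they agree
on all other edges with both endpoints between `a` and `b` (inclusive). If `f` has fewer copies of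
`{a, b}` than `g`, it must have an edge starting at `a` and ending after `b`, and one ending at `b`
and starting before `a`; these two cross. -/
lemma not_lt_of_degrees {N : ℕ} {f g : Fin (N + 1) → Fin (N + 1) → ℕ}
    (hf : ∀ a b c d, a < b → b < c → c < d → f a c = 0 ∨ f b d = 0)
    (ho : ∀ a, ∑ j ∈ Finset.Ioi a, f a j = ∑ j ∈ Finset.Ioi a, g a j)
    (hc : ∀ b, ∑ i ∈ Finset.Iio b, f i b = ∑ i ∈ Finset.Iio b, g i b)
    (a b : Fin (N + 1)) (hab : a < b)
    (ih : ∀ i j, a ≤ i → i < j → j ≤ b → (i, j) ≠ (a, b) → f i j = g i j) :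
    ¬ f a b < g a b := by
  intro hlt
  have h1 : ∃ d, b < d ∧ f a d ≠ 0 := by
    by_contra! h
    refine (Finset.sum_lt_sum (s := Finset.Ioi a) (f := f a) (g := g a) ?_
      ⟨b, by simpa using hab, hlt⟩).ne (ho a)
    intro j hj
    rw [Finset.mem_Ioi] at hj
    rcases lt_trichotomy j b with hjb | rfl | hjb
    · exact (ih a j le_rfl hj hjb.le (by simp [hjb.ne])).le
    · exact hlt.le
    · rw [h j hjb]; exact Nat.zero_le _
  have h2 : ∃ c, c < a ∧ f c b ≠ 0 := by
    by_contra! h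
    refine (Finset.sum_lt_sum (s := Finset.Iio b) (f := (f · b)) (g := (g · b)) ?_
      ⟨a, by simpa using hab, hlt⟩).ne (hc b)
    intro i hi
    rw [Finset.mem_Iio] at hi
    rcases lt_trichotomy i a with hia | rfl | hia
    · simp only [h i hia]; exact Nat.zero_le _
    · exact hlt.le
    · exact (ih i b hia.le hi le_rfl (by simp [hia.ne'])).le
  obtain ⟨d, hbd, hd⟩ := h1
  obtain ⟨c, hca, hcb⟩ := h2
  exact (hf c a b d hca hab hbd).elim hcb hd

/-- A multidissection is determined by the numbers of edges that start and that end at each vertex;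
the edges are recovered by induction on their length. -/
lemma eq_of_degrees {N k : ℕ} {f g : Fin (N + 1) → Fin (N + 1) → ℕ} (hf : IsX N k f)
    (hg : IsX N k g)
    (ho : ∀ a, ∑ j ∈ Finset.Ioi a, f a j = ∑ j ∈ Finset.Ioi a, g a j)
    (hc : ∀ b, ∑ i ∈ Finset.Iio b, f i b = ∑ i ∈ Finset.Iio b, g i b) : f = g := by
  have key : ∀ L : ℕ, ∀ a b : Fin (N + 1), a < b → (b : ℕ) - a = L → f a b = g a b := by
    intro L
    induction L using Nat.strong_induction_on with
    | _ L ih =>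
    intro a b hab hL
    have ih' : ∀ i j, a ≤ i → i < j → j ≤ b → (i, j) ≠ (a, b) → f i j = g i j := by
      intro i j hai hij hjb hne
      refine ih _ ?_ i j hij rfl
      simp only [ne_eq, Prod.mk.injEq, Fin.ext_iff] at hne
      simp only [Fin.lt_def, Fin.le_def] at *
      omega
    refine le_antisymm (not_lt.1 ?_) (not_lt.1 ?_)
    · exact not_lt_of_degrees hg.noncross (fun a => (ho a).symm) (fun b => (hc b).symm) a b hab
        fun i j h1 h2 h3 h4 => (ih' i j h1 h2 h3 h4).symm
    · exact not_lt_of_degrees hf.noncross ho hc a b hab ih'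
  funext i j
  rcases lt_trichotomy i j with h | rfl | h
  · exact key _ i j h rfl
  · rw [hf.diag, hg.diag]
  · rw [hf.symm, hg.symm, key _ j i h rfl]

lemma sum_edges_fst {N : ℕ} (f : Fin (N + 1) → Fin (N + 1) → ℕ) (a : Fin (N + 1)) :
    ∑ e ∈ edges N, (if e.1 = a then f e.1 e.2 else 0) = ∑ j ∈ Finset.Ioi a, f a j := by
  rw [edges, Finset.sum_filter, Fintype.sum_prod_type, Finset.sum_eq_single a]
  · simp [← Finset.sum_filter, Finset.filter_lt_eq_Ioi]
  · intro i _ hi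
    simp [hi]
  · simp

lemma sum_edges_snd {N : ℕ} (f : Fin (N + 1) → Fin (N + 1) → ℕ) (b : Fin (N + 1)) :
    ∑ e ∈ edges N, (if e.2 = b then f e.1 e.2 else 0) = ∑ i ∈ Finset.Iio b, f i b := by
  rw [edges, Finset.sum_filter, Fintype.sum_prod_type_right, Finset.sum_eq_single b]
  · simp [← Finset.sum_filter, Finset.filter_gt_eq_Iio]
  · intro i _ hi
    simp [hi]
  · simp

/-- The leading exponent of the monomial of a multidissection records how many edges start and how
many end at each vertex, so `eq_of_degrees` separates these exponents. -/
lemma linearIndependent_pX (N k : ℕ) :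
    LinearIndependent ℂ (fun f : {f // IsX N k f} => pX f.1) := by
  have hd : ∀ f : Fin (N + 1) → Fin (N + 1) → ℕ,
      MonomialOrder.lex.degree (pX f) = ∑ e ∈ edges N, f e.1 e.2 • lead e := by
    intro f
    rw [pX, MonomialOrder.degree_prod fun e he => pow_ne_zero _ (br_ne_zero _ (mem_edges.1 he))]
    refine Finset.sum_congr rfl fun e he => ?_
    rw [MonomialOrder.degree_pow, degree_br _ (mem_edges.1 he)]
  refine linearIndependent_of_degree MonomialOrder.lex _
    (fun f => Finset.prod_ne_zero_iff.2 fun e he =>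
      pow_ne_zero _ (br_ne_zero _ (mem_edges.1 he))) ?_
  rintro ⟨f, hf⟩ ⟨g, hg⟩ h
  simp only [hd] at h
  refine Subtype.ext (eq_of_degrees hf hg (fun a => ?_) fun b => ?_)
  · rw [← sum_edges_fst, ← sum_edges_fst]
    simpa [lead, Finsupp.finsetSum_apply, Finsupp.single_apply] using
      DFunLike.congr_fun h (toLex (0, a))
  · rw [← sum_edges_snd, ← sum_edges_snd]
    simpa [lead, Finsupp.finsetSum_apply, Finsupp.single_apply] using
      DFunLike.congr_fun h (toLex (1, b))

lemma pow_W_le_pX (N k : ℕ) :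
    W N ^ k ≤ Submodule.span ℂ (Set.range fun f : {f // IsX N k f} => pX f.1) := by
  refine (straighten_crosses N k).trans (Submodule.span_mono ?_)
  rintro _ ⟨m, hk, hv, hn, rfl⟩
  have h0 : ∀ e : Fin (N + 1) × Fin (N + 1), ¬ e.1 < e.2 → m.count e = 0 :=
    fun e he => Multiset.count_eq_zero.2 fun h => he (hv _ h)
  have hcount : ∀ e ∈ edges N, m.count (e.1, e.2) + m.count (e.2, e.1) = m.count e := by
    intro e he
    rw [h0 (e.2, e.1) (mem_edges.1 he).not_gt, add_zero]
  refine ⟨⟨fun i j => m.count (i, j) + m.count (j, i), ?_, ?_, ?_, ?_⟩, ?_⟩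
  · exact fun i j => add_comm _ _
  · exact fun i => by simp [h0 (i, i)]
  · intro a b c d hab hbc hcd
    rw [h0 (c, a) (hab.trans hbc).not_gt, h0 (d, b) (hbc.trans hcd).not_gt, add_zero, add_zero]
    by_contra! h
    exact hn _ (Multiset.count_ne_zero.1 h.1) _ (Multiset.count_ne_zero.1 h.2) ⟨hab, hbc, hcd⟩
  · rw [Finset.sum_congr rfl hcount, ← hk]
    exact Multiset.sum_count_eq_card fun e he => mem_edges.2 (hv e he)
  · change ∏ e ∈ edges N, br e ^ (m.count (e.1, e.2) + m.count (e.2, e.1)) = mprod m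
    rw [mprod, Finset.prod_multiset_map_count]
    rw [Finset.prod_congr rfl fun e he => by rw [hcount e he]]
    refine (Finset.prod_subset ?_ ?_).symm
    · exact fun e he => mem_edges.2 (hv e (Multiset.mem_toFinset.1 he))
    · intro e _ he
      rw [Multiset.count_eq_zero.2 (by simpa using he), pow_zero]

/-! ### The two computations of the trace -/

lemma exists_basis {M ι : Type*} [AddCommGroup M] [Module ℂ M] (V : Submodule ℂ M) (p : ι → M)
    (hli : LinearIndependent ℂ p) (hmem : ∀ i, p i ∈ V)
    (hspan : V ≤ Submodule.span ℂ (Set.range p)) :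
    ∃ b : Module.Basis ι ℂ V, ∀ i, (b i : M) = p i := by
  obtain rfl : V = Submodule.span ℂ (Set.range p) :=
    le_antisymm hspan (Submodule.span_le.2 (Set.range_subset_iff.2 hmem))
  exact ⟨Module.Basis.span hli, fun i => congrArg Subtype.val (Module.Basis.span_apply hli i)⟩

lemma trace_diag {ι V : Type*} [Fintype ι] [AddCommGroup V] [Module ℂ V]
    (b : Module.Basis ι ℂ V) (A : Module.End ℂ V) (c : ι → ℂ) (h : ∀ i, A (b i) = c i • b i) :
    LinearMap.trace ℂ V A = ∑ i, c i := by
  classical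
  rw [LinearMap.trace_eq_matrix_trace ℂ b, Matrix.trace]
  simp [LinearMap.toMatrix_apply, h]

lemma trace_perm {ι V : Type*} [Finite ι] [AddCommGroup V] [Module ℂ V]
    (b : Module.Basis ι ℂ V) (A : Module.End ℂ V) (σ : ι → ι) (h : ∀ i, A (b i) = b (σ i)) :
    LinearMap.trace ℂ V A = Nat.card {i // σ i = i} := by
  classical
  have := Fintype.ofFinite ι
  rw [LinearMap.trace_eq_matrix_trace ℂ b, Matrix.trace, Nat.card_eq_fintype_card,
    Fintype.card_subtype]
  simp [LinearMap.toMatrix_apply, h, Finsupp.single_apply]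

lemma exists_basis_pT (N k : ℕ) :
    ∃ b : Module.Basis {T : (Fin k → Fin (N + 1)) × (Fin k → Fin (N + 1)) // IsSSYT2 T} ℂ
      (W N ^ k : Submodule ℂ (Pol N)), ∀ T, (b T : Pol N) = pT T :=
  exists_basis (W N ^ k) pT (linearIndependent_pT N k)
    (fun T => by simpa [pT] using
      prod_br_mem Finset.univ (fun i => (T.1.1 i, T.1.2 i)) fun _ : Fin k => 1)
    (pow_W_le_pT N k)

lemma act_cyc_pow_pX {N k : ℕ} (d : ℕ) (f : Fin (N + 1) → Fin (N + 1) → ℕ) (hf : IsX N k f) :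
    IsX N k (rot^[d] f) ∧ act (cyc N ^ d) (pX f) = pX (rot^[d] f) := by
  induction d with
  | zero => exact ⟨hf, by simp [act_one]⟩
  | succ d ih =>
    rw [Function.iterate_succ_apply', pow_succ, act_mul, AlgHom.comp_apply, ih.2,
      act_cyc_pX _ ih.1.symm]
    exact ⟨ih.1.rot, rfl⟩

/-- In the basis of noncrossing monomials the `d`-th power of the signed cyclic shift is a permutation
matrix, so its trace counts the multidissections fixed by rotation by `d` steps. -/
lemma trace_cyc (N k d : ℕ) :
    LinearMap.trace ℂ _ (actV k (cyc N ^ d)) =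
      Nat.card {f : {f // IsX N k f} // rot^[d] f.1 = f.1} := by
  obtain ⟨bX, hX⟩ := exists_basis (W N ^ k) (fun f : {f // IsX N k f} => pX f.1)
    (linearIndependent_pX N k)
    (fun f => by
      have h := prod_br_mem (edges N) id fun e => f.1 e.1 e.2
      rwa [f.2.card] at h)
    (pow_W_le_pX N k)
  -- the finite basis of standard monomials shows that there are finitely many multidissections
  obtain ⟨bT, -⟩ := exists_basis_pT N k
  have := Module.Finite.of_basis bT
  have := Module.Finite.finite_basis bX
  rw [trace_perm bX _ fun f => ⟨rot^[d] f.1, (act_cyc_pow_pX d f.1 f.2).1⟩]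
  · simp only [Subtype.ext_iff]
  · intro f
    ext1
    rw [hX, ← (act_cyc_pow_pX d f.1 f.2).2, ← hX]
    rfl

lemma act_diagonal_br {N : ℕ} (v : Fin (N + 1) → ℂ) (e : Fin (N + 1) × Fin (N + 1)) :
    act (Matrix.diagonal v) (br e) = (v e.1 * v e.2) • br e := by
  have h : ∀ s i, act (Matrix.diagonal v) (xv s i) = v i • xv s i := by
    intro s i
    rw [act_xv, Finset.sum_eq_single i]
    · simp
    · intro j _ hj
      simp [Matrix.diagonal_apply_ne' v hj]
    · simp
  simp only [br, map_sub, map_mul, h, smul_mul_smul_comm, smul_sub]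

open Classical in
/-- The standard monomials are eigenvectors of diagonal matrices; adding up the eigenvalues gives the
Schur polynomial of shape `(k, k)`. -/
lemma trace_diagonal (N k : ℕ) (v : Fin (N + 1) → ℂ) :
    LinearMap.trace ℂ _ (actV k (Matrix.diagonal v)) = schur2 (N + 1) k k v := by
  obtain ⟨bT, hT⟩ := exists_basis_pT N k
  rw [trace_diag bT _ fun T => (∏ p, v (T.1.1 p)) * ∏ p, v (T.1.2 p)]
  · rw [schur2, ← Finset.sum_filter]
    exact (Finset.sum_subtype (p := fun T => IsSSYT2 T) (Finset.univ.filter fun T => IsSSYT2 T)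
      (fun T => by simp) (fun T => (∏ p, v (T.1 p)) * ∏ p, v (T.2 p))).symm
  · intro T
    ext1
    change act (Matrix.diagonal v) (bT T : Pol N) = _ • (bT T : Pol N)
    rw [hT, pT, map_prod]
    simp only [act_diagonal_br]
    rw [Finset.prod_smul, Finset.prod_mul_distrib]

/-- The signed cyclic shift is similar to the diagonal matrix of the `N + 1` distinct solutions of
`x ^ (N + 1) = -1`, so the trace of its powers is a value of the Schur polynomial. -/
lemma trace_eq_schur (N k d : ℕ) (lam : Fin (N + 1) → ℂ) (hinj : Function.Injective lam)
    (hlam : ∀ i, lam i ^ (N + 1) = -1) :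
    LinearMap.trace ℂ _ (actV k (cyc N ^ d)) =
      schur2 (N + 1) k k fun i => lam i ^ d := by
  have h0 : ∀ i, lam i ≠ 0 := fun i h => by
    have := hlam i
    rw [h, zero_pow (Nat.succ_ne_zero N)] at this
    exact neg_ne_zero.2 one_ne_zero this.symm
  set P := Matrix.vandermonde fun i => (lam i)⁻¹ with hP
  have hdet : IsUnit P.det := isUnit_iff_ne_zero.2
    (Matrix.det_vandermonde_ne_zero_iff.2 (inv_injective.comp hinj))
  -- the rows of the Vandermonde matrix at the points `(lam i)⁻¹` are left eigenvectors of `cyc N`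
  have hcomm : P * cyc N = Matrix.diagonal lam * P := by
    ext i j
    rw [Matrix.diagonal_mul, Matrix.mul_apply, Finset.sum_eq_single (j - 1)]
    · have hj := Fin.coe_sub_one j
      rw [hP, Matrix.vandermonde_apply, Matrix.vandermonde_apply, hj]
      by_cases hj0 : j = 0
      · subst hj0
        have hl := hlam i
        have hl0 : (0 - 1 : Fin (N + 1)) = Fin.last N := Fin.ext (by simp)
        have h1 : (0 : Fin (N + 1)) = Fin.last N + 1 := (Fin.last_add_one N).symm
        simp only [cyc, hl0, if_true, h1.symm, Fin.val_zero, pow_zero, mul_one]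
        rw [pow_succ] at hl
        rw [inv_pow]
        have := h0 i
        field_simp
        linear_combination -hl
      · have hj1 : j - 1 ≠ Fin.last N := fun h => by
          rw [h, Fin.val_last, if_neg hj0] at hj
          have := j.2
          have : (j : ℕ) ≠ 0 := fun h => hj0 (Fin.ext h)
          omega
        obtain ⟨t, ht⟩ : ∃ t, (j : ℕ) = t + 1 :=
          Nat.exists_eq_succ_of_ne_zero fun h => hj0 (Fin.ext h)
        rw [if_neg hj0, ht, cyc, if_pos (sub_add_cancel j 1).symm, if_neg hj1, Nat.add_sub_cancel,
          mul_one, pow_succ', mul_inv_cancel_left₀ (h0 i)]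
    · intro l _ hl
      rw [cyc, if_neg, mul_zero]
      rintro rfl
      exact hl (add_sub_cancel_right l 1).symm
    · simp
  have hconj : cyc N = P⁻¹ * Matrix.diagonal lam * P := by
    rw [mul_assoc, ← hcomm, ← mul_assoc, Matrix.nonsing_inv_mul _ hdet, one_mul]
  have hpow : cyc N ^ d = P⁻¹ * Matrix.diagonal lam ^ d * P := by
    induction d with
    | zero => simp [Matrix.nonsing_inv_mul _ hdet]
    | succ d ih =>
      rw [pow_succ, ih, pow_succ]
      nth_rw 1 [hconj]
      simp only [mul_assoc]
      rw [Matrix.mul_nonsing_inv_cancel_left _ _ hdet]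
  rw [hpow, trace_actV_conj _ _ _ (Matrix.mul_nonsing_inv _ hdet), Matrix.diagonal_pow,
    trace_diagonal]
  rfl

/-! ### Comparison with the encoding over `ZMod` -/

/-- `ZMod (N + 1)` is `Fin (N + 1)` by definition, so `IsX` and `IsAMulti` concern the same
functions. -/
lemma isX_iff (N k : ℕ) (f : ZMod (N + 1) → ZMod (N + 1) → ℕ) :
    IsAMulti (N + 1) f ∧ aEdges (N + 1) f = k ↔ IsX N k f := by
  have hcard : aEdges (N + 1) f = ∑ e ∈ edges N, f e.1 e.2 := by
    rw [aEdges, edges, Finset.sum_filter, Fintype.sum_prod_type, Finset.sum_range]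
    refine Finset.sum_congr rfl fun i _ => ?_
    rw [Finset.sum_range]
    refine Finset.sum_congr rfl fun j _ => ?_
    have h : ∀ i : Fin (N + 1), ((i : ℕ) : ZMod (N + 1)) = i := fun i => Fin.cast_val_eq_self i
    rw [h, h]
    rfl
  constructor
  · rintro ⟨⟨hs, hd, hc⟩, hk⟩
    refine ⟨hs, hd, fun a b c d hab hbc hcd => hc a c b d (Or.inl ?_), hcard ▸ hk⟩
    change min (a : ℕ) c < min (b : ℕ) d ∧ min (b : ℕ) d < max (a : ℕ) c ∧
      max (a : ℕ) c < max (b : ℕ) d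
    simp only [Fin.lt_def] at *
    omega
  · intro h
    refine ⟨⟨h.symm, h.diag, ?_⟩, hcard.trans h.card⟩
    have hmm : ∀ i j : Fin (N + 1), f (min i j : Fin (N + 1)) (max i j : Fin (N + 1)) = f i j := by
      intro i j
      rcases le_total i j with hij | hij
      · rw [min_eq_left hij, max_eq_right hij]
      · rw [min_eq_right hij, max_eq_left hij]; exact h.symm _ _
    have hmin : ∀ i j : Fin (N + 1), ((min i j : Fin (N + 1)) : ℕ) = min (i : ℕ) j := by
      intro i j
      rcases le_total i j with hij | hij
      · rw [min_eq_left hij, min_eq_left (by exact hij)]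
      · rw [min_eq_right hij, min_eq_right (by exact hij)]
    have hmax : ∀ i j : Fin (N + 1), ((max i j : Fin (N + 1)) : ℕ) = max (i : ℕ) j := by
      intro i j
      rcases le_total i j with hij | hij
      · rw [max_eq_right hij, max_eq_right (by exact hij)]
      · rw [max_eq_left hij, max_eq_left (by exact hij)]
    intro i j a b hcr
    change Fin (N + 1) at i j a b
    rw [← hmm i j, ← hmm a b]
    rcases hcr with ⟨h1, h2, h3⟩ | ⟨h1, h2, h3⟩
    · apply h.noncross <;> rw [Fin.lt_def] <;> simp only [hmin, hmax] <;> assumption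
    · refine (h.noncross _ _ _ _ ?_ ?_ ?_).symm <;> rw [Fin.lt_def] <;> simp only [hmin, hmax] <;>
        assumption

lemma rot_iterate {N : ℕ} (d : ℕ) (f : ZMod (N + 1) → ZMod (N + 1) → ℕ) (i j : ZMod (N + 1)) :
    (rot (N := N))^[d] f (i + (d : ZMod (N + 1)) : ZMod (N + 1)) (j + (d : ZMod (N + 1)) :
      ZMod (N + 1)) = f i j := by
  induction d with
  | zero => simp only [Nat.cast_zero, add_zero]; rfl
  | succ d ih =>
    have h : ∀ i : ZMod (N + 1), i + ((d + 1 : ℕ) : ZMod (N + 1)) - 1 = i + d := by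
      intro i; push_cast; ring
    rw [← ih, ← h i, ← h j]
    exact congrFun (congrFun (Function.iterate_succ_apply' (rot (N := N)) d f) _) _

lemma fixed_iff {N : ℕ} (d : ℕ) (f : ZMod (N + 1) → ZMod (N + 1) → ℕ) :
    (rot (N := N))^[d] f = f ↔
      ∀ i j : ZMod (N + 1), f (i + (d : ZMod (N + 1))) (j + (d : ZMod (N + 1))) = f i j := by
  constructor
  · intro h i j
    have := rot_iterate d f i j
    rwa [h] at this
  · intro h
    funext i j
    change ZMod (N + 1) at i j
    have h1 := rot_iterate d f (i - (d : ZMod (N + 1))) (j - (d : ZMod (N + 1)))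
    have h2 := h (i - (d : ZMod (N + 1))) (j - (d : ZMod (N + 1)))
    rw [sub_add_cancel, sub_add_cancel] at h1 h2
    exact h1.trans h2.symm

end CSP

/-- Theorem 2.5.  Fix `n ≥ 3` and `k ≥ 0`.  The set of
A-multidissections of `P_n` with exactly `k` edges, with `Z_n` acting by rotation, and
`X(q) = q^{−k} s_{(k,k)}(1,q,…,q^{n−1})`, exhibits the cyclic sieving phenomenon: for
every `d ≥ 0` the number of A-multidissections fixed by the `d`-th power of rotation
equals `ζ^{−dk}·s_{(k,k)}(1,ζ^d,…,ζ^{(n−1)d})` with `ζ = e^{2πi/n}`. -/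
theorem statement7 (n k : ℕ) (hn : 3 ≤ n) :
    ∀ d : ℕ,
      (Nat.card {f : ZMod n → ZMod n → ℕ //
          IsAMulti n f ∧ aEdges n f = k ∧
          ∀ i j, f (i + (d : ZMod n)) (j + (d : ZMod n)) = f i j} : ℂ) =
        (Complex.exp (2 * Real.pi * Complex.I / n) ^ (d * k))⁻¹ *
          schur2 n k k
            (fun i : Fin n => Complex.exp (2 * Real.pi * Complex.I / n) ^ (d * (i : ℕ))) := by
  intro d
  obtain ⟨N, rfl⟩ : ∃ N, n = N + 1 := ⟨n - 1, by omega⟩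
  set ζ := Complex.exp (2 * Real.pi * Complex.I / (N + 1 : ℕ)) with hζ
  have hprim : IsPrimitiveRoot ζ (N + 1) := Complex.isPrimitiveRoot_exp _ (Nat.succ_ne_zero N)
  -- the solutions of `x ^ n = -1` are `ω⁻¹ * ζ ^ j`, where `ω = exp (π i / n)` squares to `ζ`;
  -- the factor `ω⁻¹` in each of the `2 * k` variables produces the prefactor `ζ ^ (-(d * k))`
  obtain ⟨ω, hω, hωn⟩ : ∃ ω : ℂ, ω ^ 2 = ζ ∧ ω ^ (N + 1) = -1 := by
    refine ⟨Complex.exp (Real.pi * Complex.I / (N + 1 : ℕ)), ?_, ?_⟩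
    · rw [hζ, ← Complex.exp_nat_mul]
      congr 1
      push_cast
      ring
    · rw [← Complex.exp_nat_mul, mul_div_cancel₀ _ (Nat.cast_ne_zero.2 (Nat.succ_ne_zero N)),
        Complex.exp_pi_mul_I]
  have hω0 : ω ≠ 0 := by
    rintro rfl
    rw [zero_pow (Nat.succ_ne_zero N)] at hωn
    exact neg_ne_zero.2 one_ne_zero hωn.symm
  have h1 := CSP.trace_cyc N k d
  rw [CSP.trace_eq_schur N k d (fun i => ω⁻¹ * ζ ^ (i : ℕ))] at h1
  · have h2 : Nat.card {f : ZMod (N + 1) → ZMod (N + 1) → ℕ //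
          IsAMulti (N + 1) f ∧ aEdges (N + 1) f = k ∧
          ∀ i j, f (i + (d : ZMod (N + 1))) (j + (d : ZMod (N + 1))) = f i j} =
        Nat.card {f : {f // CSP.IsX N k f} // CSP.rot^[d] f.1 = f.1} := by
      refine Nat.card_congr ((Equiv.subtypeEquivRight fun f => ?_).trans
        (Equiv.subtypeSubtypeEquivSubtypeInter (CSP.IsX N k)
          fun f => CSP.rot^[d] f = f).symm)
      rw [← and_assoc]
      exact and_congr (CSP.isX_iff N k f) (CSP.fixed_iff d f).symm
    rw [h2, ← h1, schur2, schur2, Finset.mul_sum]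
    refine Finset.sum_congr rfl fun T _ => ?_
    rw [mul_ite, mul_zero]
    congr 1
    simp only [mul_pow, Finset.prod_mul_distrib, Finset.prod_const, Finset.card_univ,
      Fintype.card_fin, ← pow_mul, mul_comm _ d]
    have h3 : (ζ ^ (d * k))⁻¹ = (ω⁻¹) ^ (d * k) * (ω⁻¹) ^ (d * k) := by
      rw [← hω, ← pow_mul, inv_pow, ← mul_inv, ← pow_add]
      congr 2
      ring
    rw [h3]
    ring
  · intro i j hij
    have := mul_left_cancel₀ (inv_ne_zero hω0) hij
    exact Fin.ext (hprim.pow_inj i.2 j.2 this)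
  · intro i
    rw [mul_pow, inv_pow, hωn, pow_right_comm, hprim.pow_eq_one, one_pow]
    norm_num
end
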